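/- Let q be a braiding matrix with connected Dynkin diagram such that B_q is finite dimensional, and let B be a pre-Nichols algebra of q with finite GKdim. Let i,j,k ∈ I_θ be such that q_{kk} = q_{jj} = q̃_{ij}^{−1} = q̃_{jk}^{−1} ∈ G_9', q̃_{ik} = 1 and q_{ii} = q_{kk}^6. Then [[x_{iij}, x_{iijk}]_c, x_{ij}]_c = 0 in B. -/

import Mathlib

/-
Common framework for formalizing statements from
"Finite GK-dimensional pre-Nichols algebras of (super)modular and unidentified type"
(Angiono, Campagnolo, Sanmarco).

We work over `ℂ` (an algebraically closed field of characteristic zero).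
A braiding matrix is `q : Fin θ → Fin θ → ℂˣ`.  The tensor algebra `T(V)` of the
associated braided vector space of diagonal type is realized as the free algebra
on `Fin θ`.  The braided bialgebra structure on `T(V)` (the braided coproduct,
uniquely determined by the braiding matrix) is packaged in the structure
`BraidedStr`: its fields characterize it uniquely, so quantifying over
`S : BraidedStr θ q` is equivalent to using "the" braided coproduct.

A pre-Nichols algebra of `q` is the quotient `T(V)/I` by an ℕ₀-homogeneous
(two-sided) braided bi-ideal `I` generated in degrees ≥ 2 (`IsPreNicholsIdeal`);
such an ideal is automatically contained in the defining ideal `Jq` of the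
Nichols algebra, which is the largest such ideal.  A statement
"`x = 0` holds in the pre-Nichols algebra `T(V)/I`" is formalized as `x ∈ I`.
-/

open scoped TensorProduct

noncomputable section

namespace PreNicholsPaper

/-- The tensor algebra `T(V)` of the braided vector space of diagonal type of rank `θ`. -/
abbrev TV (θ : ℕ) := FreeAlgebra ℂ (Fin θ)

/-- The generator `x_i` of `T(V)`. -/
def gen (θ : ℕ) (i : Fin θ) : TV θ := FreeAlgebra.ι ℂ i

/-- The monomial `x_{i_1} ⋯ x_{i_n}` associated to a word. -/
def wordElem (θ : ℕ) (w : List (Fin θ)) : TV θ := (w.map (gen θ)).prod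

/-- The multidegree in `ℕ₀^θ` of a word. -/
def degW (θ : ℕ) (w : List (Fin θ)) : Fin θ → ℕ := fun i => w.count i

/-- `α_i`, the `i`-th canonical basis vector of `ℕ₀^θ`. -/
def δ (θ : ℕ) (i : Fin θ) : Fin θ → ℕ := fun k => if k = i then 1 else 0

/-- The bilinear form `ℕ₀^θ × ℕ₀^θ → ℂˣ` attached to the braiding matrix,
`q(α_i, α_j) = q_{ij}`, evaluated in `ℂ`. -/
def qf {θ : ℕ} (q : Fin θ → Fin θ → ℂˣ) (a b : Fin θ → ℕ) : ℂ :=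
  ∏ i : Fin θ, ∏ j : Fin θ, (q i j : ℂ) ^ (a i * b j)

/-- `q̃_{ij} = q_{ij} q_{ji}`. -/
def qtil {θ : ℕ} (q : Fin θ → Fin θ → ℂˣ) (i j : Fin θ) : ℂ := (q i j : ℂ) * (q j i : ℂ)

/-- The braided commutator `[u,v]_c = uv - q(a,b) vu` of elements `u, v`
which are homogeneous of multidegrees `a`, `b` respectively. -/
def brk {θ : ℕ} (q : Fin θ → Fin θ → ℂˣ) (a b : Fin θ → ℕ) (u v : TV θ) : TV θ :=
  u * v - qf q a b • (v * u)

/-- `(ad_c x_i) y = x_i y - q(α_i, b) y x_i` for `y` homogeneous of multidegree `b`. -/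
def ad1 {θ : ℕ} (q : Fin θ → Fin θ → ℂˣ) (i : Fin θ) (b : Fin θ → ℕ) (y : TV θ) : TV θ :=
  brk q (δ θ i) b (gen θ i) y

/-- The iterated braided adjoint `x_{i_1 i_2 ⋯ i_k} = (ad_c x_{i_1}) x_{i_2 ⋯ i_k}`. -/
def xw {θ : ℕ} (q : Fin θ → Fin θ → ℂˣ) : List (Fin θ) → TV θ
  | [] => 1
  | [i] => gen θ i
  | i :: w => ad1 q i (degW θ w) (xw q w)

/-- `(ad_c x_i)^m x_j`. -/
def adpow {θ : ℕ} (q : Fin θ → Fin θ → ℂˣ) (i j : Fin θ) : ℕ → TV θ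
  | 0 => gen θ j
  | m + 1 => ad1 q i (fun k => m * δ θ i k + δ θ j k) (adpow q i j m)

/-- The homogeneous component of total degree `n` of `T(V)`. -/
def homogTot (θ : ℕ) (n : ℕ) : Submodule ℂ (TV θ) :=
  Submodule.span ℂ {x | ∃ w : List (Fin θ), w.length = n ∧ x = wordElem θ w}

/-- The homogeneous component of multidegree `d ∈ ℕ₀^θ` of `T(V)`. -/
def homogD (θ : ℕ) (d : Fin θ → ℕ) : Submodule ℂ (TV θ) :=
  Submodule.span ℂ {x | ∃ w : List (Fin θ), degW θ w = d ∧ x = wordElem θ w}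

/-- The braided bialgebra structure on `T(V)` determined by the braiding matrix `q`:
the braided coproduct `Δ` together with the multiplication `mulB` of the braided
tensor product `T(V) ⊗ T(V)`.  These axioms determine `Δ` and `mulB` uniquely. -/
structure BraidedStr (θ : ℕ) (q : Fin θ → Fin θ → ℂˣ) where
  Δ : TV θ →ₗ[ℂ] TensorProduct ℂ (TV θ) (TV θ)
  mulB : TensorProduct ℂ (TV θ) (TV θ) →ₗ[ℂ]
    TensorProduct ℂ (TV θ) (TV θ) →ₗ[ℂ] TensorProduct ℂ (TV θ) (TV θ)
  mulB_spec : ∀ (a d : TV θ) (wb wc : List (Fin θ)),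
    mulB (a ⊗ₜ[ℂ] wordElem θ wb) (wordElem θ wc ⊗ₜ[ℂ] d)
      = qf q (degW θ wb) (degW θ wc) • ((a * wordElem θ wc) ⊗ₜ[ℂ] (wordElem θ wb * d))
  Δ_one : Δ 1 = 1 ⊗ₜ[ℂ] 1
  Δ_gen : ∀ i, Δ (gen θ i) = gen θ i ⊗ₜ[ℂ] 1 + 1 ⊗ₜ[ℂ] gen θ i
  Δ_mul : ∀ u v : TV θ, Δ (u * v) = mulB (Δ u) (Δ v)

variable {θ : ℕ} {q : Fin θ → Fin θ → ℂˣ}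

/-- `x` is a primitive element. -/
def IsPrimitiveIn (S : BraidedStr θ q) (x : TV θ) : Prop :=
  S.Δ x = x ⊗ₜ[ℂ] (1 : TV θ) + (1 : TV θ) ⊗ₜ[ℂ] x

/-- The submodule `I ⊗ T(V) + T(V) ⊗ J` of `T(V) ⊗ T(V)`. -/
def mixedPair (I J : Submodule ℂ (TV θ)) : Submodule ℂ (TensorProduct ℂ (TV θ) (TV θ)) :=
  Submodule.span ℂ
    ({x | ∃ a b : TV θ, a ∈ I ∧ x = a ⊗ₜ[ℂ] b} ∪ {x | ∃ a b : TV θ, b ∈ J ∧ x = a ⊗ₜ[ℂ] b})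

/-- The submodule `I ⊗ T(V) + T(V) ⊗ I` of `T(V) ⊗ T(V)`. -/
def mixedSub (I : Submodule ℂ (TV θ)) : Submodule ℂ (TensorProduct ℂ (TV θ) (TV θ)) :=
  mixedPair I I

/-- `I` is the defining ideal of a pre-Nichols algebra of `q`：an ℕ₀-homogeneous
two-sided (bi-)ideal of `T(V)` generated in degrees `≥ 2` which is also a coideal.
Such an ideal is automatically contained in the defining ideal `Jq` of the Nichols
algebra, and the pre-Nichols algebra is the quotient `T(V)/I`. -/
structure IsPreNicholsIdeal (S : BraidedStr θ q) (I : Submodule ℂ (TV θ)) : Prop where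
  mul_left : ∀ a x : TV θ, x ∈ I → a * x ∈ I
  mul_right : ∀ a x : TV θ, x ∈ I → x * a ∈ I
  homog_ge2 : I = Submodule.span ℂ {x | x ∈ I ∧ ∃ n, 2 ≤ n ∧ x ∈ homogTot θ n}
  coideal : ∀ x ∈ I, S.Δ x ∈ mixedSub I

/-- The defining ideal `J_q` of the Nichols algebra `B_q = T(V)/J_q`:
the maximal homogeneous braided Hopf ideal generated in degrees `≥ 2`. -/
def Jq (S : BraidedStr θ q) : Submodule ℂ (TV θ) := sSup {I | IsPreNicholsIdeal S I}

/-- The standard filtration of `T(V)`: span of words of length `≤ n`. -/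
def Wfil (θ : ℕ) (n : ℕ) : Submodule ℂ (TV θ) :=
  Submodule.span ℂ {x | ∃ w : List (Fin θ), w.length ≤ n ∧ x = wordElem θ w}

/-- The quotient algebra `T(V)/I` has finite Gelfand–Kirillov dimension, i.e.
the standard filtration of the (finitely generated) quotient has polynomial growth. -/
def FinGK (I : Submodule ℂ (TV θ)) : Prop :=
  ∃ C d : ℕ, ∀ n : ℕ, Module.finrank ℂ ((Wfil θ n).map I.mkQ) ≤ C * (n + 1) ^ d

/-- The Gelfand–Kirillov dimension of the quotient algebra `T(V)/I`. -/
def GKdim (I : Submodule ℂ (TV θ)) : ℝ :=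
  Filter.limsup
    (fun n : ℕ => Real.log (Module.finrank ℂ ((Wfil θ n).map I.mkQ)) / Real.log n)
    Filter.atTop

/-- `I` defines an eminent pre-Nichols algebra: it is a finite-GKdim pre-Nichols
algebra, and every finite-GKdim pre-Nichols algebra of `q` is a quotient of it. -/
def IsEminent (S : BraidedStr θ q) (I : Submodule ℂ (TV θ)) : Prop :=
  IsPreNicholsIdeal S I ∧ FinGK I ∧
    ∀ I' : Submodule ℂ (TV θ), IsPreNicholsIdeal S I' → FinGK I' → I ≤ I'

/-- The Dynkin diagram of the braiding matrix `q`: vertices `Fin θ`, an edge between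
`i ≠ j` iff `q̃_{ij} ≠ 1`. -/
def dynkin {θ : ℕ} (q : Fin θ → Fin θ → ℂˣ) : SimpleGraph (Fin θ) :=
  SimpleGraph.fromRel (fun i j => qtil q i j ≠ 1)

/-- The quantum number `(m)_t = 1 + t + ⋯ + t^{m-1}`. -/
def qnum (t : ℂ) (m : ℕ) : ℂ := ∑ k ∈ Finset.range m, t ^ k

/-- The set of `n ∈ ℕ₀` such that `(n+1)_{q_{ii}} (1 - q_{ii}^n q̃_{ij}) = 0`,
i.e. such that `(ad_c x_i)^{n+1} x_j = 0` in the Nichols algebra.  The entry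
`c_{ij}` of the generalized Cartan matrix is `-(min of this set)`. -/
def cSet {θ : ℕ} (q : Fin θ → Fin θ → ℂˣ) (i j : Fin θ) : Set ℕ :=
  {n | qnum (q i i : ℂ) (n + 1) * (1 - (q i i : ℂ) ^ n * qtil q i j) = 0}

/-- The generalized Cartan matrix of `q`. -/
def cij {θ : ℕ} (q : Fin θ → Fin θ → ℂˣ) (i j : Fin θ) : ℤ :=
  if i = j then 2 else -(Int.ofNat (sInf (cSet q i j)))

/-- All entries `c_{ij}` are defined at the vertex `i`. -/
def reflectable {θ : ℕ} (q : Fin θ → Fin θ → ℂˣ) (i : Fin θ) : Prop :=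
  ∀ j, j ≠ i → (cSet q i j).Nonempty

/-- The `i`-th reflection of the braiding matrix:
`(r_i q)_{jk} = q(s_i α_j, s_i α_k)` where `s_i α_j = α_j - c_{ij} α_i`. -/
def reflectMat {θ : ℕ} (q : Fin θ → Fin θ → ℂˣ) (i : Fin θ) : Fin θ → Fin θ → ℂˣ :=
  fun j k =>
    q j k * q j i ^ (-(cij q i k)) * q i k ^ (-(cij q i j)) * q i i ^ (cij q i j * cij q i k)

/-- The reflection `s_i` acting on `ℤ^θ`. -/
def sRefl {θ : ℕ} (q : Fin θ → Fin θ → ℂˣ) (i : Fin θ) (β : Fin θ → ℤ) : Fin θ → ℤ :=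
  fun k => β k - (if k = i then ∑ j, cij q i j * β j else 0)

/-- The (real) roots of `q`, together with the base points of the Weyl groupoid at
which they live: pairs `(q', β)` obtained from a simple root of `q` by iterated
reflections. -/
inductive ReachRoot {θ : ℕ} (q₀ : Fin θ → Fin θ → ℂˣ) :
    (Fin θ → Fin θ → ℂˣ) → (Fin θ → ℤ) → Prop
  | simple (j : Fin θ) : ReachRoot q₀ q₀ (fun k => if k = j then 1 else 0)
  | reflect {q' : Fin θ → Fin θ → ℂˣ} {β : Fin θ → ℤ} (i : Fin θ) :
      ReachRoot q₀ q' β → ReachRoot q₀ (reflectMat q' i) (sRefl q' i β)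

/-- `q` has a finite (generalized) root system: all reflections are defined at every
point of the Weyl groupoid, and the set of roots so obtained is finite. -/
def FiniteRootSystem {θ : ℕ} (q : Fin θ → Fin θ → ℂˣ) : Prop :=
  (∀ q' i, (∃ β, ReachRoot q q' β) → reflectable q' i) ∧
    Set.Finite {β : Fin θ → ℤ | ∃ q', ReachRoot q q' β}

/-- Conjecture (Andruskiewitsch–Angiono–Heckenberger): the root system of a Nichols
algebra of diagonal type with finite Gelfand–Kirillov dimension is finite. -/
def AAH : Prop :=
  ∀ (θ : ℕ) (q : Fin θ → Fin θ → ℂˣ) (S : BraidedStr θ q), FinGK (Jq S) → FiniteRootSystem q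

/-- The two-sided ideal of `T(V)` generated by a set. -/
def idealGen (θ : ℕ) (s : Set (TV θ)) : Submodule ℂ (TV θ) :=
  Submodule.span ℂ {x | ∃ g ∈ s, ∃ a b : TV θ, x = a * g * b}

end PreNicholsPaper

namespace PreNicholsPaper

/-- `-c₀₁` for a rank-two diagram with `q₀₀ = ζ^P`, `q̃₀₁ = ζ^T`, `ζ` of order nine. -/
def cartanExp (P T : ℕ) : Option ℕ :=
  (List.range 9).find? fun n =>
    decide ((P * n + T) % 9 = 0) || (decide (P % 9 ≠ 0) && decide (P * (n + 1) % 9 = 0))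

/-- Exponents `(P, T, R)` of a rank-two diagram after reflecting at the first vertex. -/
def reflectFst (c : ℕ) (x : ℕ × ℕ × ℕ) : ℕ × ℕ × ℕ :=
  (x.1, (8 * x.2.1 + 7 * x.1 * c) % 9, (x.2.2 + c * x.2.1 + c * c * x.1) % 9)

/-- Exponents `(P, T, R)` of a rank-two diagram after reflecting at the second vertex. -/
def reflectSnd (c : ℕ) (x : ℕ × ℕ × ℕ) : ℕ × ℕ × ℕ :=
  ((x.1 + c * x.2.1 + c * c * x.2.2) % 9, (8 * x.2.1 + 7 * x.2.2 * c) % 9, x.2.2)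

/-- Reflecting alternately, starting from `x` at the first vertex, one either meets an undefined
reflection or returns to `x₀`, with all Cartan integers at least `A` (first vertex) and
`B` (second vertex) in absolute value. -/
def infiniteCheck (A B : ℕ) (x₀ : ℕ × ℕ × ℕ) : ℕ → ℕ × ℕ × ℕ → Bool
  | 0, _ => false
  | n + 1, x =>
    match cartanExp x.1 x.2.1 with
    | none => true
    | some c => decide (A ≤ c) &&
      match cartanExp (reflectFst c x).2.2 (reflectFst c x).2.1 with
      | none => true
      | some d => decide (B ≤ d) &&
        (decide (reflectSnd d (reflectFst c x) = x₀) ||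
          infiniteCheck A B x₀ n (reflectSnd d (reflectFst c x)))

/-- Exponent of `q(γ, γ)` for `γ = a α_i + b α_j + c α_k`. -/
def selfExp (a b c : ℕ) : ℕ := 6 * (a * a) + b * b + c * c + 8 * (a * b) + 8 * (b * c)

/-- Exponent of `q_{ss}` for the vertices `s = i, j, k`. -/
def vertexExp : Fin 3 → ℕ := ![6, 1, 1]

/-- Exponent of `q̃(γ, α_s)` for `γ = a α_i + b α_j + c α_k`. -/
def linkExp (a b c : ℕ) : Fin 3 → ℕ :=
  ![12 * a + 8 * b, 8 * a + 2 * b + 8 * c, 8 * b + 2 * c]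

/-- Exponent of `q̃(α_s, α_t)` for the vertices `s, t = i, j, k`. -/
def pairExp : Fin 3 → Fin 3 → ℕ := ![![12, 8, 0], ![8, 2, 8], ![0, 8, 2]]

theorem exists_infinite_extension : ∀ (a : Fin 6) (b : Fin 4) (c : Fin 2), 2 ≤ a.1 + b.1 + c.1 →
    ∃ s t : Fin 3, (linkExp a b c t) % 9 ≠ ((a.1 + b.1 + c.1) * pairExp s t) % 9 ∧
      (infiniteCheck 2 2 (vertexExp s, linkExp a b c s % 9, selfExp a b c % 9) 20
        (vertexExp s, linkExp a b c s % 9, selfExp a b c % 9) = true ∨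
      infiniteCheck 1 4 (vertexExp s, linkExp a b c s % 9, selfExp a b c % 9) 20
        (vertexExp s, linkExp a b c s % 9, selfExp a b c % 9) = true) := by
  decide +kernel

theorem pow_eq_one_iff_mod {z : ℂˣ} (hz : IsPrimitiveRoot z 9) (n : ℕ) :
    z ^ n = 1 ↔ n % 9 = 0 := by
  rw [hz.pow_eq_one_iff_dvd, Nat.dvd_iff_mod_eq_zero]

theorem pow_eq_pow_iff_mod {z : ℂˣ} (hz : IsPrimitiveRoot z 9) (m n : ℕ) :
    z ^ m = z ^ n ↔ m % 9 = n % 9 := by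
  rw [pow_eq_pow_iff_modEq, ← hz.eq_orderOf]
  rfl

theorem qnum_eq_zero_iff (t : ℂ) (n : ℕ) : qnum t (n + 1) = 0 ↔ t ≠ 1 ∧ t ^ (n + 1) = 1 := by
  unfold qnum
  by_cases h : t = 1
  · subst h
    simp only [one_pow, Finset.sum_const, Finset.card_range, nsmul_eq_mul, mul_one, ne_eq,
      not_true_eq_false, false_and, iff_false]
    exact_mod_cast Nat.succ_ne_zero n
  · rw [geom_sum_eq h, div_eq_zero_iff, sub_eq_zero, sub_eq_zero]
    simp [h]

theorem mem_cSet_iff {θ : ℕ} {q : Fin θ → Fin θ → ℂˣ} {z : ℂˣ} (hz : IsPrimitiveRoot z 9)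
    {i j : Fin θ} {P T : ℕ} (hP : q i i = z ^ P) (hT : q i j * q j i = z ^ T) (n : ℕ) :
    n ∈ cSet q i j ↔ (P * n + T) % 9 = 0 ∨ (P % 9 ≠ 0 ∧ P * (n + 1) % 9 = 0) := by
  have hT' : qtil q i j = ((z ^ T : ℂˣ) : ℂ) := by rw [← hT]; simp [qtil]
  rw [cSet, Set.mem_ofPred_eq, mul_eq_zero, qnum_eq_zero_iff, hP, hT', sub_eq_zero, or_comm,
    eq_comm (a := (1 : ℂ))]
  refine or_congr ?_ (and_congr (not_congr ?_) ?_)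
  · rw [← pow_eq_one_iff_mod hz, pow_add, pow_mul]; simp [Units.ext_iff]
  · rw [← pow_eq_one_iff_mod hz]; simp [Units.ext_iff]
  · rw [← pow_eq_one_iff_mod hz, pow_mul]; simp [Units.ext_iff]

theorem cSet_eq_empty {θ : ℕ} {q : Fin θ → Fin θ → ℂˣ} {z : ℂˣ} (hz : IsPrimitiveRoot z 9)
    {i j : Fin θ} {P T : ℕ} (hP : q i i = z ^ P) (hT : q i j * q j i = z ^ T)
    (h : cartanExp P T = none) : ¬ (cSet q i j).Nonempty := by
  rintro ⟨n, hn⟩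
  rw [mem_cSet_iff hz hP hT] at hn
  have := List.find?_eq_none.1 h (n % 9) (List.mem_range.2 (Nat.mod_lt _ (by norm_num)))
  simp only [Bool.or_eq_true, Bool.and_eq_true, decide_eq_true_eq, not_or, not_and] at this
  rcases hn with hn | ⟨h1, h2⟩
  · exact this.1 (by rw [← hn]; simp [Nat.add_mod, Nat.mul_mod])
  · exact this.2 h1 (by rw [← h2]; simp [Nat.add_mod, Nat.mul_mod])

theorem cij_eq {θ : ℕ} {q : Fin θ → Fin θ → ℂˣ} {z : ℂˣ} (hz : IsPrimitiveRoot z 9)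
    {i j : Fin θ} (hij : i ≠ j) {P T c : ℕ} (hP : q i i = z ^ P) (hT : q i j * q j i = z ^ T)
    (h : cartanExp P T = some c) : cij q i j = -(c : ℤ) := by
  rw [cij, if_neg hij]
  congr 1
  rw [cartanExp, List.find?_range_eq_some] at h
  simp only [Bool.or_eq_true, Bool.and_eq_true, decide_eq_true_eq, Bool.not_eq_true',
    Bool.or_eq_false_iff] at h
  have hmem : c ∈ cSet q i j := (mem_cSet_iff hz hP hT c).2 h.1
  have : sInf (cSet q i j) = c := by
    refine le_antisymm (Nat.sInf_le hmem) (le_csInf ⟨c, hmem⟩ fun n hn => ?_)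
    by_contra! hlt
    rw [mem_cSet_iff hz hP hT] at hn
    have := h.2.2 n hlt
    simp only [decide_eq_false_iff_not, Bool.and_eq_false_iff] at this
    tauto
  rw [this]; rfl

/-- The rank-two braiding matrix `q` has `q₀₀ = z^P`, `q̃₀₁ = z^T`, `q₁₁ = z^R`,
where `x = (P, T, R)`. -/
def HasExp (z : ℂˣ) (q : Fin 2 → Fin 2 → ℂˣ) (x : ℕ × ℕ × ℕ) : Prop :=
  q 0 0 = z ^ x.1 ∧ q 0 1 * q 1 0 = z ^ x.2.1 ∧ q 1 1 = z ^ x.2.2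

theorem reflectMat_apply_self {q : Fin 2 → Fin 2 → ℂˣ} (i : Fin 2) :
    reflectMat q i i i = q i i := by
  have : cij q i i = 2 := by simp [cij]
  simp only [reflectMat, this]
  group

theorem reflectMat_apply_other {q : Fin 2 → Fin 2 → ℂˣ} {i j : Fin 2} {c : ℕ}
    (hc : cij q i j = -(c : ℤ)) :
    reflectMat q i j j = q j j * (q i j * q j i) ^ c * q i i ^ (c * c) := by
  simp only [reflectMat, hc, neg_neg, neg_mul_neg]
  norm_cast
  rw [mul_pow, mul_comm (q i j ^ c), mul_assoc (q j j)]

theorem reflectMat_apply_link {q : Fin 2 → Fin 2 → ℂˣ} {i j : Fin 2} {c : ℕ}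
    (hc : cij q i j = -(c : ℤ)) :
    reflectMat q i i j * reflectMat q i j i = (q i j * q j i)⁻¹ * (q i i ^ (2 * c))⁻¹ := by
  have : cij q i i = 2 := by simp [cij]
  simp only [reflectMat, hc, this, neg_neg]
  generalize q i j = a
  generalize q j i = b
  generalize q i i = p
  have h1 : p ^ (2 * -(c : ℤ)) = (p ^ (2 * c))⁻¹ := by
    rw [mul_neg, zpow_neg]; norm_cast
  have h2 : p ^ (-(c : ℤ) * 2) = (p ^ (2 * c))⁻¹ := by rw [mul_comm, h1]
  have h3 : ∀ a : ℂˣ, a ^ (-2 : ℤ) = (a ^ 2)⁻¹ := fun a => by rw [zpow_neg]; rfl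
  rw [h1, h2, h3, h3, zpow_natCast]
  simp only [Units.ext_iff, Units.val_mul, Units.val_inv_eq_inv_val, Units.val_pow_eq_pow_val]
  field_simp
  rw [← pow_mul, mul_comm]

theorem inv_link_eq {z : ℂˣ} (hz : IsPrimitiveRoot z 9) (P T c : ℕ) :
    (z ^ T)⁻¹ * ((z ^ P) ^ (2 * c))⁻¹ = z ^ ((8 * T + 7 * P * c) % 9) := by
  rw [← mul_inv, inv_eq_iff_mul_eq_one, ← pow_mul, ← pow_add, ← pow_add, pow_eq_one_iff_mod hz,
    Nat.add_mod_mod]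
  have : T + P * (2 * c) + (8 * T + 7 * P * c) = 9 * (T + P * c) := by ring
  rw [this, Nat.mul_mod_right]

theorem other_eq {z : ℂˣ} (hz : IsPrimitiveRoot z 9) (P T R c : ℕ) :
    z ^ R * (z ^ T) ^ c * (z ^ P) ^ (c * c) = z ^ ((R + c * T + c * c * P) % 9) := by
  rw [← pow_mul, ← pow_mul, ← pow_add, ← pow_add, pow_eq_pow_iff_mod hz, Nat.mod_mod]
  ring_nf

theorem HasExp.reflect_zero {z : ℂˣ} (hz : IsPrimitiveRoot z 9) {q : Fin 2 → Fin 2 → ℂˣ}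
    {x : ℕ × ℕ × ℕ} (h : HasExp z q x) {c : ℕ} (hc : cij q 0 1 = -(c : ℤ)) :
    HasExp z (reflectMat q 0) (reflectFst c x) := by
  obtain ⟨h0, h1, h2⟩ := h
  refine ⟨by rw [reflectMat_apply_self, h0]; rfl, ?_, ?_⟩
  · rw [reflectMat_apply_link hc, h0, h1, inv_link_eq hz]; rfl
  · rw [reflectMat_apply_other hc, h0, h1, h2, other_eq hz]; rfl

theorem HasExp.reflect_one {z : ℂˣ} (hz : IsPrimitiveRoot z 9) {q : Fin 2 → Fin 2 → ℂˣ}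
    {x : ℕ × ℕ × ℕ} (h : HasExp z q x) {c : ℕ} (hc : cij q 1 0 = -(c : ℤ)) :
    HasExp z (reflectMat q 1) (reflectSnd c x) := by
  obtain ⟨h0, h1, h2⟩ := h
  refine ⟨?_, ?_, by rw [reflectMat_apply_self, h2]; rfl⟩
  · rw [reflectMat_apply_other hc, h0, mul_comm (q 1 0), h1, h2, other_eq hz]; rfl
  · rw [mul_comm, reflectMat_apply_link hc, mul_comm (q 1 0), h1, h2, inv_link_eq hz]; rfl

theorem sRefl_self {q : Fin 2 → Fin 2 → ℂˣ} {i j : Fin 2} (hij : i ≠ j) {c : ℕ}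
    (hc : cij q i j = -(c : ℤ)) (β : Fin 2 → ℤ) : sRefl q i β i = c * β j - β i := by
  have h : cij q i i = 2 := by simp [cij]
  have : ∑ l, cij q i l * β l = cij q i i * β i + cij q i j * β j := by
    rw [← Finset.sum_pair (f := fun l => cij q i l * β l) hij]
    refine (Finset.sum_subset (Finset.subset_univ _) ?_).symm
    intro l _ hl
    exfalso
    revert hl
    fin_cases i <;> fin_cases j <;> fin_cases l <;> simp_all
  rw [sRefl, if_pos rfl, this, hc, h]
  ring

theorem sRefl_other {q : Fin 2 → Fin 2 → ℂˣ} {i j : Fin 2} (hij : i ≠ j) (β : Fin 2 → ℤ) :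
    sRefl q i β j = β j := by
  simp [sRefl, hij.symm]

theorem not_finiteRootSystem_of_infiniteCheck {z : ℂˣ} (hz : IsPrimitiveRoot z 9)
    {q : Fin 2 → Fin 2 → ℂˣ} {x₀ : ℕ × ℕ × ℕ} (hq : HasExp z q x₀) {A B N : ℕ} (hA : 1 ≤ A)
    (hAB : 4 ≤ A * B) (hcheck : infiniteCheck A B x₀ N x₀ = true) :
    ¬ FiniteRootSystem q := by
  rintro ⟨hrefl, hfin⟩
  have step : ∀ m : ℤ, ∃ q' β x n, ReachRoot q q' β ∧ HasExp z q' x ∧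
      infiniteCheck A B x₀ n x = true ∧ 0 ≤ β 0 ∧ 2 * β 0 + 1 ≤ A * β 1 ∧ m ≤ β 0 := by
    intro m
    induction m using Int.inductionOn' (b := 0) with
    | zero =>
      refine ⟨q, _, x₀, N, ReachRoot.simple 1, hq, hcheck, ?_⟩
      simpa using hA
    | pred k hk ih =>
      obtain ⟨q', β, x, n, h1, h2, h3, h4, h5, h6⟩ := ih
      exact ⟨q', β, x, n, h1, h2, h3, h4, h5, by omega⟩
    | succ k hk ih =>
      obtain ⟨q', β, x, n, h1, h2, h3, h4, h5, h6⟩ := ih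
      cases n with
      | zero => simp [infiniteCheck] at h3
      | succ n =>
      rw [infiniteCheck] at h3
      split at h3
      · rename_i hnone
        exact absurd (hrefl q' 0 ⟨β, h1⟩ 1 (by decide)) (cSet_eq_empty hz h2.1 h2.2.1 hnone)
      rename_i c hc
      have hc' := cij_eq hz (by decide : (0 : Fin 2) ≠ 1) h2.1 h2.2.1 hc
      have r1 := h1.reflect 0
      have e1 := h2.reflect_zero hz hc'
      rw [Bool.and_eq_true, decide_eq_true_eq] at h3
      obtain ⟨hAc, h3⟩ := h3
      have e1' : reflectMat q' 0 1 0 * reflectMat q' 0 0 1 = z ^ (reflectFst c x).2.1 := by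
        rw [mul_comm]; exact e1.2.1
      split at h3
      · rename_i hnone
        exact absurd (hrefl _ 1 ⟨_, r1⟩ 0 (by decide)) (cSet_eq_empty hz e1.2.2 e1' hnone)
      rename_i d hd
      have hd' := cij_eq hz (by decide : (1 : Fin 2) ≠ 0) e1.2.2 e1' hd
      have r2 := r1.reflect 1
      have e2 := e1.reflect_one hz hd'
      rw [Bool.and_eq_true, decide_eq_true_eq, Bool.or_eq_true, decide_eq_true_eq] at h3
      obtain ⟨hBd, h3⟩ := h3
      have hn : ∃ n, infiniteCheck A B x₀ n (reflectSnd d (reflectFst c x)) = true := by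
        rcases h3 with h3 | h3
        · exact ⟨N, by rw [h3]; exact hcheck⟩
        · exact ⟨n, h3⟩
      obtain ⟨n', hn'⟩ := hn
      refine ⟨_, _, _, n', r2, e2, hn', ?_⟩
      rw [sRefl_other (by decide : (1 : Fin 2) ≠ 0), sRefl_self (by decide : (1 : Fin 2) ≠ 0) hd',
        sRefl_other (by decide : (0 : Fin 2) ≠ 1), sRefl_self (by decide : (0 : Fin 2) ≠ 1) hc']
      have hA' : (1 : ℤ) ≤ A := by exact_mod_cast hA
      have hAB' : (4 : ℤ) ≤ A * B := by exact_mod_cast hAB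
      have hAc' : (A : ℤ) ≤ c := by exact_mod_cast hAc
      have hBd' : (B : ℤ) ≤ d := by exact_mod_cast hBd
      have hy : 0 < β 1 := by
        by_contra! hy
        have := mul_nonpos_of_nonneg_of_nonpos (by omega : (0 : ℤ) ≤ A) hy
        omega
      have f1 : (A : ℤ) * β 1 ≤ c * β 1 := mul_le_mul_of_nonneg_right hAc' hy.le
      have f2 : β 0 + 1 ≤ c * β 1 - β 0 := by omega
      have f2' : (A : ℤ) * β 1 ≤ (c * β 1 - β 0) + β 0 := by omega
      refine ⟨by omega, ?_, by omega⟩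
      generalize (c * β 1 - β 0 : ℤ) = x' at *
      have f3 : (4 : ℤ) * x' ≤ A * (d * x') := by
        rw [← mul_assoc]
        refine mul_le_mul_of_nonneg_right (hAB'.trans ?_) (by omega)
        exact mul_le_mul_of_nonneg_left hBd' (by omega)
      rw [mul_sub]
      omega
  obtain ⟨M, hM⟩ := (hfin.image fun β => β 0).bddAbove
  obtain ⟨q', β, x, n, h1, -, -, -, -, h6⟩ := step (M + 1)
  have := hM ⟨β, ⟨q', h1⟩, rfl⟩
  simp only at this
  omega

section Words

variable {θ : ℕ}

theorem degW_nil : degW θ [] = 0 := by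
  ext i; simp [degW]

theorem degW_cons (a : Fin θ) (w : List (Fin θ)) : degW θ (a :: w) = δ θ a + degW θ w := by
  ext i
  simp only [degW, δ, Pi.add_apply, List.count_cons, beq_iff_eq, eq_comm (a := a)]
  omega

theorem degW_append (v w : List (Fin θ)) : degW θ (v ++ w) = degW θ v + degW θ w := by
  ext i; simp [degW]

theorem wordElem_nil : wordElem θ [] = 1 := by simp [wordElem]

theorem wordElem_cons (a : Fin θ) (w : List (Fin θ)) :
    wordElem θ (a :: w) = gen θ a * wordElem θ w := by simp [wordElem]

theorem wordElem_append (v w : List (Fin θ)) :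
    wordElem θ (v ++ w) = wordElem θ v * wordElem θ w := by simp [wordElem]

theorem wordElem_singleton (a : Fin θ) : wordElem θ [a] = gen θ a := by simp [wordElem]

/-- The basis of `T(V)` given by the monomials. -/
def wordBasis (θ : ℕ) : Module.Basis (List (Fin θ)) ℂ (TV θ) :=
  (FreeAlgebra.basisFreeMonoid ℂ (Fin θ)).reindex FreeMonoid.toList

theorem wordBasis_apply (w : List (Fin θ)) : wordBasis θ w = wordElem θ w := by
  rw [wordBasis, Module.Basis.reindex_apply]
  change MonoidAlgebra.lift ℂ (FreeAlgebra ℂ (Fin θ)) (FreeMonoid (Fin θ))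
    (FreeMonoid.lift (FreeAlgebra.ι ℂ)) (MonoidAlgebra.single (FreeMonoid.ofList w) 1) = _
  rw [MonoidAlgebra.lift_single, one_smul, FreeMonoid.lift_apply]
  rfl

theorem word_ext {M : Type*} [AddCommMonoid M] [Module ℂ M] {F G : TV θ →ₗ[ℂ] M}
    (h : ∀ w, F (wordElem θ w) = G (wordElem θ w)) : F = G :=
  (wordBasis θ).ext fun w => by rw [wordBasis_apply, h]

theorem word_tmul_ext {M : Type*} [AddCommMonoid M] [Module ℂ M]
    {F G : TV θ ⊗[ℂ] TV θ →ₗ[ℂ] M}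
    (h : ∀ v w, F (wordElem θ v ⊗ₜ wordElem θ w) = G (wordElem θ v ⊗ₜ wordElem θ w)) : F = G :=
  TensorProduct.ext (word_ext fun v => word_ext fun w => h v w)

/-- The linear endomorphism of `T(V)` which is diagonal on the monomials. -/
def diag (f : List (Fin θ) → ℂ) : TV θ →ₗ[ℂ] TV θ :=
  (wordBasis θ).constr ℂ fun w => f w • wordElem θ w

theorem diag_word (f : List (Fin θ) → ℂ) (w : List (Fin θ)) :
    diag f (wordElem θ w) = f w • wordElem θ w := by
  rw [← wordBasis_apply, diag, Module.Basis.constr_basis, wordBasis_apply]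

/-- The coefficient of the monomial `w`. -/
def coeff (w : List (Fin θ)) : TV θ →ₗ[ℂ] ℂ := (wordBasis θ).coord w

theorem coeff_word (v w : List (Fin θ)) :
    coeff v (wordElem θ w) = if w = v then 1 else 0 := by
  rw [← wordBasis_apply, coeff, Module.Basis.coord_apply, Module.Basis.repr_self,
    Finsupp.single_apply]

theorem coeff_nil_one : coeff (θ := θ) [] 1 = 1 := by
  rw [← wordElem_nil, coeff_word]; simp

theorem coeff_nil_gen_mul (a : Fin θ) (y : TV θ) : coeff [] (gen θ a * y) = 0 := by
  have : coeff [] ∘ₗ LinearMap.mulLeft ℂ (gen θ a) = 0 := word_ext fun w => by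
    simp [← wordElem_cons, coeff_word]
  exact LinearMap.congr_fun this y

theorem coeff_nil_mul_gen (a : Fin θ) (y : TV θ) : coeff [] (y * gen θ a) = 0 := by
  have : coeff [] ∘ₗ LinearMap.mulRight ℂ (gen θ a) = 0 := word_ext fun w => by
    simp [← wordElem_append, ← wordElem_singleton a, coeff_word]
  exact LinearMap.congr_fun this y

theorem coeff_singleton_gen_mul (a b : Fin θ) (y : TV θ) :
    coeff [b] (gen θ a * y) = if a = b then coeff [] y else 0 := by
  have : coeff [b] ∘ₗ LinearMap.mulLeft ℂ (gen θ a) =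
      (if a = b then (1 : ℂ) else 0) • coeff [] := word_ext fun w => by
    simp only [LinearMap.comp_apply, LinearMap.mulLeft_apply, ← wordElem_cons, coeff_word,
      LinearMap.smul_apply, smul_eq_mul, List.cons.injEq]
    split_ifs <;> simp_all
  have := LinearMap.congr_fun this y
  rwa [LinearMap.smul_apply, ite_smul, one_smul, zero_smul] at this

theorem coeff_singleton_mul_gen (a b : Fin θ) (y : TV θ) :
    coeff [b] (y * gen θ a) = if a = b then coeff [] y else 0 := by
  have : coeff [b] ∘ₗ LinearMap.mulRight ℂ (gen θ a) =
      (if a = b then (1 : ℂ) else 0) • coeff [] := word_ext fun w => by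
    simp only [LinearMap.comp_apply, LinearMap.mulRight_apply, ← wordElem_singleton a,
      ← wordElem_append, coeff_word, LinearMap.smul_apply, smul_eq_mul]
    cases w with
    | nil => simp
    | cons c w => simp
  have := LinearMap.congr_fun this y
  rwa [LinearMap.smul_apply, ite_smul, one_smul, zero_smul] at this

end Words

section Form

variable {θ : ℕ} (q : Fin θ → Fin θ → ℂˣ)

theorem qf_add_left (a b c : Fin θ → ℕ) : qf q (a + b) c = qf q a c * qf q b c := by
  simp only [qf, ← Finset.prod_mul_distrib, Pi.add_apply, add_mul, pow_add]

theorem qf_add_right (a b c : Fin θ → ℕ) : qf q a (b + c) = qf q a b * qf q a c := by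
  simp only [qf, ← Finset.prod_mul_distrib, Pi.add_apply, mul_add, pow_add]

theorem qf_zero_left (a : Fin θ → ℕ) : qf q 0 a = 1 := by simp [qf]

theorem qf_zero_right (a : Fin θ → ℕ) : qf q a 0 = 1 := by simp [qf]

theorem qf_δ (i j : Fin θ) : qf q (δ θ i) (δ θ j) = q i j := by
  rw [qf, Finset.prod_eq_single i, Finset.prod_eq_single j]
  · simp [δ]
  · intro b _ hb; simp [δ, hb]
  · simp
  · intro b _ hb
    exact Finset.prod_eq_one fun c _ => by simp [δ, hb]
  · simp

theorem qf_ne_zero (a b : Fin θ → ℕ) : qf q a b ≠ 0 :=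
  Finset.prod_ne_zero_iff.2 fun _ _ => Finset.prod_ne_zero_iff.2 fun _ _ =>
    pow_ne_zero _ (Units.ne_zero _)

theorem qf_nsmul_left (n : ℕ) (a b : Fin θ → ℕ) : qf q (n • a) b = qf q a b ^ n := by
  induction n with
  | zero => rw [zero_smul, qf_zero_left, pow_zero]
  | succ n ih => rw [succ_nsmul, qf_add_left, ih, pow_succ]

theorem qf_nsmul_right (n : ℕ) (a b : Fin θ → ℕ) : qf q a (n • b) = qf q a b ^ n := by
  induction n with
  | zero => rw [zero_smul, qf_zero_right, pow_zero]
  | succ n ih => rw [succ_nsmul, qf_add_right, ih, pow_succ]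

/-- The automorphism `y ↦ q(d, deg y) y` of `T(V)`. -/
def actL (d : Fin θ → ℕ) : TV θ →ₗ[ℂ] TV θ := diag fun w => qf q d (degW θ w)

/-- The automorphism `y ↦ q(deg y, d) y` of `T(V)`. -/
def actR (d : Fin θ → ℕ) : TV θ →ₗ[ℂ] TV θ := diag fun w => qf q (degW θ w) d

theorem actL_word (d : Fin θ → ℕ) (w : List (Fin θ)) :
    actL q d (wordElem θ w) = qf q d (degW θ w) • wordElem θ w := diag_word _ _

theorem actR_word (d : Fin θ → ℕ) (w : List (Fin θ)) :
    actR q d (wordElem θ w) = qf q (degW θ w) d • wordElem θ w := diag_word _ _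

theorem actL_gen_mul (d : Fin θ → ℕ) (a : Fin θ) (y : TV θ) :
    actL q d (gen θ a * y) = qf q d (δ θ a) • (gen θ a * actL q d y) := by
  have : actL q d ∘ₗ LinearMap.mulLeft ℂ (gen θ a) =
      qf q d (δ θ a) • (LinearMap.mulLeft ℂ (gen θ a) ∘ₗ actL q d) := word_ext fun w => by
    simp [← wordElem_cons, actL_word, degW_cons, qf_add_right, smul_smul]
  exact LinearMap.congr_fun this y

theorem actL_one (d : Fin θ → ℕ) : actL q d 1 = 1 := by
  rw [← wordElem_nil, actL_word, degW_nil, qf_zero_right, one_smul]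

theorem actL_mul (d : Fin θ → ℕ) (x y : TV θ) :
    actL q d (x * y) = actL q d x * actL q d y := by
  have : (LinearMap.mul ℂ (TV θ)).compr₂ (actL q d) =
      (LinearMap.mul ℂ (TV θ)).compl₁₂ (actL q d) (actL q d) :=
    word_ext fun v => word_ext fun w => by
      simp [← wordElem_append, actL_word, degW_append, qf_add_right, smul_smul, mul_comm]
  exact LinearMap.congr_fun₂ this x y

theorem actL_homog {d e : Fin θ → ℕ} {x : TV θ} (hx : x ∈ homogD θ e) :
    actL q d x = qf q d e • x := by
  induction hx using Submodule.span_induction with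
  | mem x h => obtain ⟨w, rfl, rfl⟩ := h; exact actL_word _ _ _
  | zero => simp
  | add x y _ _ hx hy => rw [map_add, hx, hy, smul_add]
  | smul c x _ hx => rw [map_smul, hx, smul_comm]

theorem actR_homog {d e : Fin θ → ℕ} {x : TV θ} (hx : x ∈ homogD θ e) :
    actR q d x = qf q e d • x := by
  induction hx using Submodule.span_induction with
  | mem x h => obtain ⟨w, rfl, rfl⟩ := h; exact actR_word _ _ _
  | zero => simp
  | add x y _ _ hx hy => rw [map_add, hx, hy, smul_add]
  | smul c x _ hx => rw [map_smul, hx, smul_comm]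

theorem actL_add (d e : Fin θ → ℕ) : actL q (d + e) = actL q d ∘ₗ actL q e :=
  word_ext fun w => by
    simp [actL_word, qf_add_left, smul_smul, mul_comm]

theorem actR_add (d e : Fin θ → ℕ) : actR q (d + e) = actR q d ∘ₗ actR q e :=
  word_ext fun w => by
    simp [actR_word, qf_add_right, smul_smul, mul_comm]

theorem actL_zero : actL q 0 = LinearMap.id :=
  word_ext fun w => by simp [actL_word, qf_zero_left]

theorem actR_zero : actR q 0 = LinearMap.id :=
  word_ext fun w => by simp [actR_word, qf_zero_right]

theorem coeff_nil_actL (d : Fin θ → ℕ) (x : TV θ) : coeff [] (actL q d x) = coeff [] x := by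
  have : coeff [] ∘ₗ actL q d = coeff [] := word_ext fun w => by
    rw [LinearMap.comp_apply, actL_word, map_smul, coeff_word]
    split_ifs with h
    · rw [h, degW_nil, qf_zero_right]; simp
    · simp
  exact LinearMap.congr_fun this x

end Form

section Homogeneous

variable {θ : ℕ}

theorem word_mem_homogD (w : List (Fin θ)) : wordElem θ w ∈ homogD θ (degW θ w) :=
  Submodule.subset_span ⟨w, rfl, rfl⟩

theorem gen_mem_homogD (a : Fin θ) : gen θ a ∈ homogD θ (δ θ a) := by
  have := word_mem_homogD [a]
  rwa [wordElem_singleton, degW_cons, degW_nil, add_zero] at this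

theorem one_mem_homogD : (1 : TV θ) ∈ homogD θ 0 := by
  have := word_mem_homogD (θ := θ) []
  rwa [wordElem_nil, degW_nil] at this

theorem mul_mem_homogD {d e : Fin θ → ℕ} {x y : TV θ} (hx : x ∈ homogD θ d)
    (hy : y ∈ homogD θ e) : x * y ∈ homogD θ (d + e) := by
  have := Submodule.mul_mem_mul hx hy
  rw [homogD, homogD, Submodule.span_mul_span] at this
  refine Submodule.span_mono ?_ this
  rintro _ ⟨_, ⟨v, rfl, rfl⟩, _, ⟨w, rfl, rfl⟩, rfl⟩
  exact ⟨v ++ w, degW_append _ _, (wordElem_append _ _).symm⟩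

theorem brk_mem_homogD (q : Fin θ → Fin θ → ℂˣ) {d e : Fin θ → ℕ} {x y : TV θ}
    (hx : x ∈ homogD θ d) (hy : y ∈ homogD θ e) (a b : Fin θ → ℕ) :
    brk q a b x y ∈ homogD θ (d + e) :=
  Submodule.sub_mem _ (mul_mem_homogD hx hy)
    (Submodule.smul_mem _ _ (add_comm d e ▸ mul_mem_homogD hy hx))

theorem length_eq_sum_degW (w : List (Fin θ)) : w.length = ∑ i, degW θ w i := by
  induction w with
  | nil => simp [degW]
  | cons a w ih =>
    rw [degW_cons, List.length_cons, ih]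
    simp [Finset.sum_add_distrib, δ, add_comm]

end Homogeneous

section Coproduct

variable {θ : ℕ} {q : Fin θ → Fin θ → ℂˣ}

theorem mulB_tmul_word (S : BraidedStr θ q) (a b d : TV θ) (w : List (Fin θ)) :
    S.mulB (a ⊗ₜ b) (wordElem θ w ⊗ₜ d) = (a * wordElem θ w) ⊗ₜ (actR q (degW θ w) b * d) := by
  have : S.mulB.flip (wordElem θ w ⊗ₜ d) ∘ₗ TensorProduct.mk ℂ _ _ a =
      TensorProduct.mk ℂ _ _ (a * wordElem θ w) ∘ₗ LinearMap.mulRight ℂ d ∘ₗ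
        actR q (degW θ w) := word_ext fun v => by
    simp [S.mulB_spec, actR_word]
  exact LinearMap.congr_fun this b

theorem mulB_homog_tmul (S : BraidedStr θ q) {e : Fin θ → ℕ} (a c d : TV θ) {b : TV θ}
    (hb : b ∈ homogD θ e) :
    S.mulB (a ⊗ₜ b) (c ⊗ₜ d) = (a * actL q e c) ⊗ₜ (b * d) := by
  have : S.mulB (a ⊗ₜ b) ∘ₗ (TensorProduct.mk ℂ _ _).flip d =
      (TensorProduct.mk ℂ _ _).flip (b * d) ∘ₗ LinearMap.mulLeft ℂ a ∘ₗ actL q e :=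
    word_ext fun v => by
      simp [mulB_tmul_word, actR_homog q hb, actL_word, TensorProduct.smul_tmul']
  exact LinearMap.congr_fun this c

/-- Left multiplication by `y ⊗ 1 + 1 ⊗ y` in the braided tensor product, for `y` of degree `e`. -/
def primMul (q : Fin θ → Fin θ → ℂˣ) (e : Fin θ → ℕ) (y : TV θ) :
    TV θ ⊗[ℂ] TV θ →ₗ[ℂ] TV θ ⊗[ℂ] TV θ :=
  TensorProduct.map (LinearMap.mulLeft ℂ y) LinearMap.id +
    TensorProduct.map (actL q e) (LinearMap.mulLeft ℂ y)

theorem primMul_tmul (e : Fin θ → ℕ) (y u v : TV θ) :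
    primMul q e y (u ⊗ₜ v) = (y * u) ⊗ₜ v + actL q e u ⊗ₜ (y * v) := by
  simp [primMul]

theorem mulB_primitive (S : BraidedStr θ q) {e : Fin θ → ℕ} {y : TV θ} (hy : y ∈ homogD θ e) :
    S.mulB (y ⊗ₜ 1 + 1 ⊗ₜ y) = primMul q e y := by
  refine TensorProduct.ext' fun c d => ?_
  rw [map_add, LinearMap.add_apply, mulB_homog_tmul S _ _ _ one_mem_homogD,
    mulB_homog_tmul S _ _ _ hy, primMul_tmul, actL_zero]
  simp

theorem coprod_gen_mul (S : BraidedStr θ q) (a : Fin θ) (y : TV θ) :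
    S.Δ (gen θ a * y) = primMul q (δ θ a) (gen θ a) (S.Δ y) := by
  rw [S.Δ_mul, S.Δ_gen, mulB_primitive S (gen_mem_homogD a)]

/-- Two linear maps agree if they agree at `1` and the agreement is inherited under left
multiplication by generators. -/
theorem gen_mul_ext {M : Type*} [AddCommMonoid M] [Module ℂ M] {F G : TV θ →ₗ[ℂ] M}
    (h1 : F 1 = G 1) (h : ∀ a y, F y = G y → F (gen θ a * y) = G (gen θ a * y)) : F = G := by
  refine word_ext fun w => ?_
  induction w with
  | nil => rw [wordElem_nil, h1]
  | cons a w ih => rw [wordElem_cons, h _ _ ih]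

theorem actL_coprod (S : BraidedStr θ q) (d : Fin θ → ℕ) :
    S.Δ ∘ₗ actL q d = TensorProduct.map (actL q d) (actL q d) ∘ₗ S.Δ := by
  refine gen_mul_ext (by simp [actL_one, S.Δ_one]) fun a y h => ?_
  simp only [LinearMap.comp_apply] at h ⊢
  rw [actL_gen_mul, map_smul, coprod_gen_mul, coprod_gen_mul, h]
  generalize S.Δ y = z
  induction z using TensorProduct.induction_on with
  | zero => simp
  | add x y hx hy => simp only [map_add, smul_add, hx, hy]
  | tmul u v =>
    have hcomm : actL q (δ θ a) (actL q d u) = actL q d (actL q (δ θ a) u) := by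
      rw [← LinearMap.comp_apply, ← actL_add, add_comm, actL_add, LinearMap.comp_apply]
    simp only [TensorProduct.map_tmul, primMul_tmul, map_add, actL_gen_mul, smul_add,
      TensorProduct.smul_tmul', TensorProduct.tmul_smul, hcomm]

/-- The right counit axiom. -/
theorem counit_right (S : BraidedStr θ q) (y : TV θ) :
    TensorProduct.rid ℂ _ (TensorProduct.map LinearMap.id (coeff []) (S.Δ y)) = y := by
  have : (TensorProduct.rid ℂ (TV θ)).toLinearMap ∘ₗ
      TensorProduct.map LinearMap.id (coeff []) ∘ₗ S.Δ = LinearMap.id := by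
    refine gen_mul_ext (by simp [S.Δ_one, coeff_nil_one]) fun a y h => ?_
    simp only [LinearMap.comp_apply, LinearEquiv.coe_coe, LinearMap.id_apply] at h ⊢
    conv_rhs => rw [← h]
    rw [coprod_gen_mul]
    generalize S.Δ y = z
    induction z using TensorProduct.induction_on with
    | zero => simp
    | add x y hx hy => simp only [map_add, mul_add, hx, hy]
    | tmul u v => simp [primMul_tmul, coeff_nil_gen_mul]
  exact LinearMap.congr_fun this y

theorem counit_left (S : BraidedStr θ q) (y : TV θ) :
    TensorProduct.lid ℂ _ (TensorProduct.map (coeff []) LinearMap.id (S.Δ y)) = y := by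
  have : (TensorProduct.lid ℂ (TV θ)).toLinearMap ∘ₗ
      TensorProduct.map (coeff []) LinearMap.id ∘ₗ S.Δ = LinearMap.id := by
    refine gen_mul_ext (by simp [S.Δ_one, coeff_nil_one]) fun a y h => ?_
    simp only [LinearMap.comp_apply, LinearEquiv.coe_coe, LinearMap.id_apply] at h ⊢
    conv_rhs => rw [← h]
    rw [coprod_gen_mul]
    generalize S.Δ y = z
    induction z using TensorProduct.induction_on with
    | zero => simp
    | add x y hx hy => simp only [map_add, mul_add, hx, hy]
    | tmul u v => simp [primMul_tmul, coeff_nil_gen_mul, coeff_nil_actL]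
  exact LinearMap.congr_fun this y

end Coproduct

section Derivations

variable {θ : ℕ} (q : Fin θ → Fin θ → ℂˣ)

/-- The skew derivation on monomials. -/
def skewDerWord (b : Fin θ) : List (Fin θ) → TV θ
  | [] => 0
  | a :: w => gen θ a * skewDerWord b w +
      if a = b then qf q (δ θ a) (degW θ w) • wordElem θ w else 0

/-- The skew derivation `∂_b` of `T(V)`, with
`∂_b(x_a y) = x_a ∂_b(y) + δ_{ab} q(α_a, deg y) y`. -/
def skewDer (b : Fin θ) : TV θ →ₗ[ℂ] TV θ := (wordBasis θ).constr ℂ (skewDerWord q b)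

theorem skewDer_word (b : Fin θ) (w : List (Fin θ)) :
    skewDer q b (wordElem θ w) = skewDerWord q b w := by
  rw [← wordBasis_apply, skewDer, Module.Basis.constr_basis]

theorem skewDer_one (b : Fin θ) : skewDer q b 1 = 0 := by
  rw [← wordElem_nil, skewDer_word]; rfl

theorem skewDer_gen_mul (a b : Fin θ) (y : TV θ) :
    skewDer q b (gen θ a * y) =
      gen θ a * skewDer q b y + if a = b then actL q (δ θ a) y else 0 := by
  have : skewDer q b ∘ₗ LinearMap.mulLeft ℂ (gen θ a) =
      LinearMap.mulLeft ℂ (gen θ a) ∘ₗ skewDer q b +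
        (if a = b then (1 : ℂ) else 0) • actL q (δ θ a) := word_ext fun w => by
    rw [LinearMap.add_apply, LinearMap.smul_apply, LinearMap.comp_apply, LinearMap.comp_apply,
      LinearMap.mulLeft_apply, LinearMap.mulLeft_apply, ← wordElem_cons, skewDer_word,
      skewDer_word, actL_word, skewDerWord, ite_smul, one_smul, zero_smul]
  have := LinearMap.congr_fun this y
  rwa [LinearMap.add_apply, LinearMap.smul_apply, ite_smul, one_smul, zero_smul] at this

theorem skewDer_gen (a b : Fin θ) : skewDer q b (gen θ a) = if a = b then 1 else 0 := by
  have := skewDer_gen_mul q a b 1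
  rwa [mul_one, skewDer_one, mul_zero, zero_add, actL_one] at this

theorem skewDer_mul (b : Fin θ) (x y : TV θ) :
    skewDer q b (x * y) = x * skewDer q b y + skewDer q b x * actL q (δ θ b) y := by
  have : skewDer q b ∘ₗ LinearMap.mulRight ℂ y = LinearMap.mulRight ℂ (skewDer q b y) +
      LinearMap.mulRight ℂ (actL q (δ θ b) y) ∘ₗ skewDer q b := by
    refine gen_mul_ext (by simp [skewDer_one]) fun a x h => ?_
    simp only [LinearMap.comp_apply, LinearMap.mulRight_apply, LinearMap.add_apply] at h ⊢
    rw [mul_assoc, skewDer_gen_mul, h, skewDer_gen_mul]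
    split_ifs with hab
    · subst hab
      rw [actL_mul]; noncomm_ring
    · noncomm_ring
  exact LinearMap.congr_fun this x

theorem skewDerWord_mem (b : Fin θ) (w : List (Fin θ)) :
    skewDerWord q b w ∈ Submodule.span ℂ
      {x | ∃ v : List (Fin θ), δ θ b + degW θ v = degW θ w ∧ x = wordElem θ v} := by
  induction w with
  | nil => exact Submodule.zero_mem _
  | cons a w ih =>
    refine Submodule.add_mem _ ?_ ?_
    · have := Submodule.mem_map_of_mem (f := LinearMap.mulLeft ℂ (gen θ a)) ih
      rw [Submodule.map_span] at this
      refine Submodule.span_mono ?_ this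
      rintro _ ⟨_, ⟨v, hv, rfl⟩, rfl⟩
      refine ⟨a :: v, ?_, (wordElem_cons _ _).symm⟩
      rw [degW_cons, degW_cons, ← hv]; abel
    · split_ifs with h
      · subst h
        exact Submodule.smul_mem _ _ (Submodule.subset_span ⟨w, (degW_cons _ _).symm, rfl⟩)
      · exact Submodule.zero_mem _

variable {q}

theorem skewDer_eq_coprod (S : BraidedStr θ q) (b : Fin θ) (y : TV θ) :
    TensorProduct.rid ℂ _ (TensorProduct.map LinearMap.id (coeff [b]) (S.Δ y)) =
      skewDer q b y := by
  have : (TensorProduct.rid ℂ (TV θ)).toLinearMap ∘ₗ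
      TensorProduct.map LinearMap.id (coeff [b]) ∘ₗ S.Δ = skewDer q b := by
    refine gen_mul_ext ?_ fun a y h => ?_
    · have : coeff [b] (1 : TV θ) = 0 := by rw [← wordElem_nil, coeff_word]; simp
      simp [S.Δ_one, skewDer_one, this]
    simp only [LinearMap.comp_apply, LinearEquiv.coe_coe] at h ⊢
    have h2 : skewDer q b (gen θ a * y) =
        gen θ a * TensorProduct.rid ℂ _ (TensorProduct.map LinearMap.id (coeff [b]) (S.Δ y)) +
        if a = b then actL q (δ θ a)
          (TensorProduct.rid ℂ _ (TensorProduct.map LinearMap.id (coeff []) (S.Δ y))) else 0 := by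
      rw [skewDer_gen_mul, h, counit_right]
    rw [h2, coprod_gen_mul]
    generalize S.Δ y = z
    induction z using TensorProduct.induction_on with
    | zero => simp
    | add x y hx hy =>
      simp only [map_add, mul_add, hx, hy]
      split_ifs <;> abel
    | tmul u v =>
      simp only [primMul_tmul, map_add, TensorProduct.map_tmul, LinearMap.id_apply,
        TensorProduct.rid_tmul, coeff_singleton_gen_mul, mul_smul_comm, map_smul]
      split_ifs <;> simp
  exact LinearMap.congr_fun this y

theorem skewDer_coprod (S : BraidedStr θ q) (b : Fin θ) (y : TV θ) :
    TensorProduct.map LinearMap.id (skewDer q b) (S.Δ y) = S.Δ (skewDer q b y) := by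
  have : TensorProduct.map LinearMap.id (skewDer q b) ∘ₗ S.Δ = S.Δ ∘ₗ skewDer q b := by
    refine gen_mul_ext (by simp [S.Δ_one, skewDer_one]) fun a y h => ?_
    simp only [LinearMap.comp_apply] at h ⊢
    have h2 : S.Δ (skewDer q b (gen θ a * y)) = primMul q (δ θ a) (gen θ a)
        (TensorProduct.map LinearMap.id (skewDer q b) (S.Δ y)) +
        if a = b then TensorProduct.map (actL q (δ θ a)) (actL q (δ θ a)) (S.Δ y) else 0 := by
      rw [skewDer_gen_mul, map_add, coprod_gen_mul, h]
      split_ifs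
      · congr 1
        exact LinearMap.congr_fun (actL_coprod S (δ θ a)) y
      · rw [map_zero]
    rw [h2, coprod_gen_mul]
    generalize S.Δ y = z
    induction z using TensorProduct.induction_on with
    | zero => simp
    | add x y hx hy =>
      simp only [map_add, hx, hy]
      split_ifs <;> abel
    | tmul u v =>
      simp only [primMul_tmul, map_add, TensorProduct.map_tmul, LinearMap.id_apply,
        skewDer_gen_mul, TensorProduct.tmul_add]
      split_ifs
      · abel
      · simp
  exact LinearMap.congr_fun this y

variable (q) in
/-- The linear forms `ε ∘ ∂_{b_n} ∘ ⋯ ∘ ∂_{b_1}`. -/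
def derForm : List (Fin θ) → TV θ →ₗ[ℂ] ℂ
  | [] => coeff []
  | b :: v => derForm v ∘ₗ skewDer q b

theorem derForm_word_of_ne {v w : List (Fin θ)} (h : degW θ v ≠ degW θ w) :
    derForm q v (wordElem θ w) = 0 := by
  induction v generalizing w with
  | nil =>
    rw [derForm, coeff_word, if_neg]
    rintro rfl
    exact h rfl
  | cons b v ih =>
    rw [derForm, LinearMap.comp_apply, skewDer_word]
    have hle : Submodule.span ℂ {x | ∃ u : List (Fin θ), δ θ b + degW θ u = degW θ w ∧
        x = wordElem θ u} ≤ LinearMap.ker (derForm q v) := by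
      refine Submodule.span_le.2 ?_
      rintro _ ⟨u, hu, rfl⟩
      refine ih fun hvu => h ?_
      rw [degW_cons, hvu, hu]
    exact hle (skewDerWord_mem q b w)

theorem derForm_coprod (S : BraidedStr θ q) (v w : List (Fin θ)) (y : TV θ) :
    TensorProduct.lid ℂ ℂ (TensorProduct.map (derForm q v) (derForm q w) (S.Δ y)) =
      derForm q (w ++ v) y := by
  induction w generalizing y with
  | nil =>
    conv_rhs => rw [List.nil_append, ← counit_right S y]
    generalize S.Δ y = z
    induction z using TensorProduct.induction_on with
    | zero => simp
    | add x y hx hy => simp only [map_add, hx, hy]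
    | tmul u v => simp [derForm, mul_comm]
  | cons b w ih =>
    rw [List.cons_append, derForm, derForm, LinearMap.comp_apply, ← ih, ← skewDer_coprod,
      ← LinearMap.comp_apply (TensorProduct.map (derForm q v) (derForm q w)),
      ← TensorProduct.map_comp, LinearMap.comp_id]

variable (q) in
/-- The joint kernel of the forms `ε ∘ ∂_{b_n} ∘ ⋯ ∘ ∂_{b_1}`. -/
def derKer : Submodule ℂ (TV θ) := ⨅ v, LinearMap.ker (derForm q v)

theorem mem_derKer {x : TV θ} : x ∈ derKer q ↔ ∀ v, derForm q v x = 0 := by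
  simp [derKer]

theorem mem_derKer_iff_skewDer {x : TV θ} :
    x ∈ derKer q ↔ coeff [] x = 0 ∧ ∀ b, skewDer q b x ∈ derKer q := by
  simp only [mem_derKer]
  constructor
  · exact fun h => ⟨h [], fun b v => h (b :: v)⟩
  · rintro ⟨h0, h⟩ (_ | ⟨b, v⟩)
    · exact h0
    · exact h b v

/-- `T(V)`-homogeneous elements of nonzero degree have no constant term. -/
theorem coeff_nil_homogD {d : Fin θ → ℕ} (hd : d ≠ 0) {x : TV θ} (hx : x ∈ homogD θ d) :
    coeff [] x = 0 := by
  have : homogD θ d ≤ LinearMap.ker (coeff (θ := θ) []) := by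
    refine Submodule.span_le.2 ?_
    rintro _ ⟨w, rfl, rfl⟩
    rw [SetLike.mem_coe, LinearMap.mem_ker, coeff_word, if_neg]
    rintro rfl
    exact hd degW_nil
  exact this hx

theorem diag_mem_derKer {f : List (Fin θ) → ℂ}
    (hf : ∀ v w, degW θ v = degW θ w → f v = f w) {x : TV θ} (hx : x ∈ derKer q) :
    diag f x ∈ derKer q := by
  rw [mem_derKer] at hx ⊢
  intro v
  have : derForm q v ∘ₗ diag f = f v • derForm q v := word_ext fun w => by
    rw [LinearMap.comp_apply, diag_word, map_smul, LinearMap.smul_apply]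
    by_cases h : degW θ v = degW θ w
    · rw [hf _ _ h]
    · rw [derForm_word_of_ne h, smul_zero, smul_zero]
  have := LinearMap.congr_fun this x
  rw [LinearMap.comp_apply] at this
  rw [this, LinearMap.smul_apply, hx, smul_zero]

theorem actL_mem_derKer (d : Fin θ → ℕ) {x : TV θ} (hx : x ∈ derKer q) :
    actL q d x ∈ derKer q :=
  diag_mem_derKer (fun v w h => by rw [h]) hx

theorem gen_mul_mem_derKer (a : Fin θ) {x : TV θ} (hx : x ∈ derKer q) :
    gen θ a * x ∈ derKer q := by
  rw [mem_derKer]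
  intro v
  induction v generalizing x with
  | nil => exact coeff_nil_gen_mul _ _
  | cons b v ih =>
    rw [derForm, LinearMap.comp_apply, skewDer_gen_mul, map_add,
      ih ((mem_derKer_iff_skewDer.1 hx).2 b), zero_add]
    split_ifs
    · exact mem_derKer.1 (actL_mem_derKer _ hx) v
    · exact map_zero _

theorem mul_gen_mem_derKer (a : Fin θ) {x : TV θ} (hx : x ∈ derKer q) :
    x * gen θ a ∈ derKer q := by
  rw [mem_derKer]
  intro v
  induction v generalizing x with
  | nil => exact coeff_nil_mul_gen _ _
  | cons b v ih =>
    rw [derForm, LinearMap.comp_apply, skewDer_mul, map_add, actL_homog q (gen_mem_homogD a),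
      mul_smul_comm, map_smul, ih ((mem_derKer_iff_skewDer.1 hx).2 b), smul_zero, add_zero,
      skewDer_gen]
    split_ifs
    · rw [mul_one]; exact mem_derKer.1 hx v
    · rw [mul_zero, map_zero]

theorem mul_mem_derKer_left (a : TV θ) {x : TV θ} (hx : x ∈ derKer q) : a * x ∈ derKer q := by
  have : (derKer q).mkQ ∘ₗ LinearMap.mulRight ℂ x = 0 := by
    refine gen_mul_ext (by simpa using hx) fun b y h => ?_
    simp only [LinearMap.comp_apply, LinearMap.mulRight_apply, LinearMap.zero_apply,
      Submodule.mkQ_apply, Submodule.Quotient.mk_eq_zero, mul_assoc] at h ⊢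
    exact gen_mul_mem_derKer b h
  have := LinearMap.congr_fun this a
  simpa using this

theorem mul_mem_derKer_right (a : TV θ) {x : TV θ} (hx : x ∈ derKer q) : x * a ∈ derKer q := by
  have : (derKer q).mkQ ∘ₗ LinearMap.mulLeft ℂ x = 0 := word_ext fun w => by
    simp only [LinearMap.comp_apply, LinearMap.mulLeft_apply, LinearMap.zero_apply,
      Submodule.mkQ_apply, Submodule.Quotient.mk_eq_zero]
    induction w generalizing x with
    | nil => rwa [wordElem_nil, mul_one]
    | cons b w ih =>
      rw [wordElem_cons, ← mul_assoc]
      exact ih (mul_gen_mem_derKer b hx)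
  have := LinearMap.congr_fun this a
  simpa using this

end Derivations

section Separation

/-- A family of linear forms separating the points of `W` separates those of `A ⊗ W`. -/
theorem tmul_eq_zero_of_forms {ι A W : Type*} [AddCommGroup A] [Module ℂ A] [AddCommGroup W]
    [Module ℂ W] {F : ι → W →ₗ[ℂ] ℂ} (hF : ∀ y, (∀ i, F i y = 0) → y = 0) {z : A ⊗[ℂ] W}
    (hz : ∀ i, TensorProduct.rid ℂ A (TensorProduct.map LinearMap.id (F i) z) = 0) : z = 0 := by
  classical
  let B := Module.Basis.ofVectorSpace ℂ A
  have key : ∀ (i : ι) (n : _) (z : A ⊗[ℂ] W),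
      F i (TensorProduct.equivFinsuppOfBasisLeft B z n) =
        B.coord n (TensorProduct.rid ℂ A (TensorProduct.map LinearMap.id (F i) z)) := by
    intro i n z
    induction z using TensorProduct.induction_on with
    | zero => simp
    | add x y hx hy => simp only [map_add, Finsupp.add_apply, hx, hy]
    | tmul a y => simp [mul_comm]
  rw [← (TensorProduct.equivFinsuppOfBasisLeft B).map_eq_zero_iff]
  ext n
  exact hF _ fun i => by rw [key, hz, map_zero]

variable {θ : ℕ}

theorem mem_mixedSub_iff {I : Submodule ℂ (TV θ)} {z : TV θ ⊗[ℂ] TV θ} :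
    z ∈ mixedSub I ↔ TensorProduct.map I.mkQ I.mkQ z = 0 := by
  constructor
  · intro hz
    induction hz using Submodule.span_induction with
    | mem x h =>
      obtain ⟨a, b, ha, rfl⟩ | ⟨a, b, hb, rfl⟩ := h
      · simp [(Submodule.Quotient.mk_eq_zero I).2 ha]
      · simp [(Submodule.Quotient.mk_eq_zero I).2 hb]
    | zero => simp
    | add x y _ _ hx hy => rw [map_add, hx, hy, add_zero]
    | smul c x _ hx => rw [map_smul, hx, smul_zero]
  · intro hz
    have hex : Function.Exact I.subtype I.mkQ := LinearMap.exact_subtype_mkQ I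
    have hsurj : Function.Surjective I.mkQ := I.mkQ_surjective
    have := TensorProduct.map_ker hex hsurj hex hsurj
    rw [← LinearMap.mem_ker, this] at hz
    refine (sup_le ?_ ?_ : _ ≤ mixedSub I) hz
    · rintro _ ⟨y, rfl⟩
      induction y using TensorProduct.induction_on with
      | zero => simp
      | add x y hx hy => rw [map_add]; exact Submodule.add_mem _ hx hy
      | tmul a b => exact Submodule.subset_span (Or.inr ⟨a, b, b.2, rfl⟩)
    · rintro _ ⟨y, rfl⟩
      induction y using TensorProduct.induction_on with
      | zero => simp
      | add x y hx hy => rw [map_add]; exact Submodule.add_mem _ hx hy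
      | tmul a b => exact Submodule.subset_span (Or.inl ⟨a, b, a.2, rfl⟩)

theorem mixedSub_le {I : Submodule ℂ (TV θ)} {M : Submodule ℂ (TV θ ⊗[ℂ] TV θ)}
    (hl : ∀ a b, a ∈ I → a ⊗ₜ b ∈ M) (hr : ∀ a b, b ∈ I → a ⊗ₜ b ∈ M) : mixedSub I ≤ M := by
  refine Submodule.span_le.2 ?_
  rintro _ (⟨a, b, ha, rfl⟩ | ⟨a, b, hb, rfl⟩)
  exacts [hl a b ha, hr a b hb]

theorem tmul_mem_mixedSub_left {I : Submodule ℂ (TV θ)} {a : TV θ} (ha : a ∈ I) (b : TV θ) :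
    a ⊗ₜ[ℂ] b ∈ mixedSub I :=
  Submodule.subset_span (Or.inl ⟨a, b, ha, rfl⟩)

theorem tmul_mem_mixedSub_right {I : Submodule ℂ (TV θ)} (a : TV θ) {b : TV θ} (hb : b ∈ I) :
    a ⊗ₜ[ℂ] b ∈ mixedSub I :=
  Submodule.subset_span (Or.inr ⟨a, b, hb, rfl⟩)

end Separation

section Length

variable {θ : ℕ}

/-- The projection onto the component of total degree `n`. -/
def lenProj (θ n : ℕ) : TV θ →ₗ[ℂ] TV θ := diag fun w => if w.length = n then 1 else 0

theorem lenProj_word (n : ℕ) (w : List (Fin θ)) :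
    lenProj θ n (wordElem θ w) = if w.length = n then wordElem θ w else 0 := by
  rw [lenProj, diag_word, ite_smul, one_smul, zero_smul]

theorem lenProj_mem_homogTot (n : ℕ) (x : TV θ) : lenProj θ n x ∈ homogTot θ n := by
  have : (homogTot θ n).mkQ ∘ₗ lenProj θ n = 0 := word_ext fun w => by
    simp only [LinearMap.comp_apply, lenProj_word, LinearMap.zero_apply, Submodule.mkQ_apply,
      Submodule.Quotient.mk_eq_zero]
    split_ifs with h
    · exact Submodule.subset_span ⟨w, h, rfl⟩
    · exact Submodule.zero_mem _
  simpa using LinearMap.congr_fun this x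

theorem lenProj_homogTot {m n : ℕ} {x : TV θ} (hx : x ∈ homogTot θ m) :
    lenProj θ n x = if m = n then x else 0 := by
  induction hx using Submodule.span_induction with
  | mem x h => obtain ⟨w, rfl, rfl⟩ := h; exact lenProj_word _ _
  | zero => simp
  | add x y _ _ hx hy => rw [map_add, hx, hy]; split_ifs <;> simp
  | smul c x _ hx => rw [map_smul, hx]; split_ifs <;> simp

theorem exists_sum_lenProj (x : TV θ) :
    ∃ M, ∀ m, M ≤ m → ∑ n ∈ Finset.range m, lenProj θ n x = x := by
  have hx : x ∈ Submodule.span ℂ (Set.range (wordBasis θ)) := by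
    rw [(wordBasis θ).span_eq]; trivial
  induction hx using Submodule.span_induction with
  | mem x h =>
    obtain ⟨w, rfl⟩ := h
    refine ⟨w.length + 1, fun m hm => ?_⟩
    simp only [wordBasis_apply, lenProj_word, Finset.sum_ite_eq, Finset.mem_range]
    rw [if_pos (by omega)]
  | zero => exact ⟨0, by simp⟩
  | add x y _ _ hx hy =>
    obtain ⟨M, hM⟩ := hx
    obtain ⟨M', hM'⟩ := hy
    refine ⟨max M M', fun m hm => ?_⟩
    simp only [map_add, Finset.sum_add_distrib]
    rw [hM m (le_trans (le_max_left _ _) hm), hM' m (le_trans (le_max_right _ _) hm)]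
  | smul c x _ hx =>
    obtain ⟨M, hM⟩ := hx
    refine ⟨M, fun m hm => ?_⟩
    simp only [map_smul, ← Finset.smul_sum]
    rw [hM m hm]

theorem lenProj_zero (x : TV θ) : lenProj θ 0 x = coeff [] x • (1 : TV θ) := by
  have : lenProj θ 0 = (coeff []).smulRight 1 := word_ext fun w => by
    rw [lenProj_word, LinearMap.smulRight_apply, coeff_word]
    cases w <;> simp [wordElem_nil]
  rw [this, LinearMap.smulRight_apply]

theorem lenProj_one (x : TV θ) : lenProj θ 1 x = ∑ b, coeff [b] x • gen θ b := by
  have : lenProj θ 1 = ∑ b : Fin θ, (coeff [b]).smulRight (gen θ b) := word_ext fun w => by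
    rw [lenProj_word, LinearMap.sum_apply]
    simp only [LinearMap.smulRight_apply, coeff_word]
    match w with
    | [] => simp
    | [a] => simp [wordElem_singleton]
    | a :: b :: w => simp
  rw [this, LinearMap.sum_apply]
  rfl

end Length

section NicholsIdeal

variable {θ : ℕ} {q : Fin θ → Fin θ → ℂˣ}

theorem derForm_singleton (b : Fin θ) : derForm q [b] = coeff [b] := by
  refine gen_mul_ext ?_ fun a y _ => ?_
  · rw [derForm, LinearMap.comp_apply, skewDer_one, map_zero, ← wordElem_nil, coeff_word]
    simp
  · rw [derForm, LinearMap.comp_apply, derForm, skewDer_gen_mul, coeff_singleton_gen_mul,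
      map_add, coeff_nil_gen_mul, zero_add]
    split_ifs
    · exact coeff_nil_actL _ _ _
    · exact map_zero _

theorem derKer_coideal (S : BraidedStr θ q) {x : TV θ} (hx : x ∈ derKer q) :
    S.Δ x ∈ mixedSub (derKer q) := by
  rw [mem_mixedSub_iff]
  let F : List (Fin θ) → (TV θ ⧸ derKer q) →ₗ[ℂ] ℂ := fun v =>
    (derKer q).liftQ (derForm q v) (iInf_le _ v)
  have hF : ∀ y, (∀ v, F v y = 0) → y = 0 := by
    intro y hy
    obtain ⟨y, rfl⟩ := (derKer q).mkQ_surjective y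
    rw [Submodule.mkQ_apply, Submodule.Quotient.mk_eq_zero, mem_derKer]
    exact fun v => hy v
  refine tmul_eq_zero_of_forms hF fun w => hF _ fun v => ?_
  have key : ∀ z : TV θ ⊗[ℂ] TV θ, F v (TensorProduct.rid ℂ _ (TensorProduct.map LinearMap.id (F w)
      (TensorProduct.map (derKer q).mkQ (derKer q).mkQ z))) =
      TensorProduct.lid ℂ ℂ (TensorProduct.map (derForm q v) (derForm q w) z) := by
    intro z
    induction z using TensorProduct.induction_on with
    | zero => simp
    | add x y hx hy => simp only [map_add, hx, hy]
    | tmul a b =>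
      have hF' : ∀ u y, F u (Submodule.Quotient.mk y) = derForm q u y := fun _ _ => rfl
      simp [hF', mul_comm]
  rw [key, derForm_coprod]
  exact mem_derKer.1 hx _

theorem derKer_isPreNicholsIdeal (S : BraidedStr θ q) : IsPreNicholsIdeal S (derKer q) where
  mul_left a _ hx := mul_mem_derKer_left a hx
  mul_right a _ hx := mul_mem_derKer_right a hx
  coideal _ hx := derKer_coideal S hx
  homog_ge2 := by
    refine le_antisymm (fun x hx => ?_) (Submodule.span_le.2 fun x hx => hx.1)
    obtain ⟨M, hM⟩ := exists_sum_lenProj x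
    rw [← hM M le_rfl]
    refine Submodule.sum_mem _ fun n _ => ?_
    match n with
    | 0 =>
      rw [lenProj_zero, show coeff [] x = 0 from mem_derKer.1 hx [], zero_smul]
      exact Submodule.zero_mem _
    | 1 =>
      rw [lenProj_one]
      refine Submodule.sum_mem _ fun b _ => ?_
      rw [← derForm_singleton (q := q), mem_derKer.1 hx, zero_smul]
      exact Submodule.zero_mem _
    | n + 2 =>
      refine Submodule.subset_span ⟨diag_mem_derKer (fun v w h => ?_) hx, n + 2, by omega,
        lenProj_mem_homogTot _ _⟩
      rw [length_eq_sum_degW, length_eq_sum_degW, h]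

theorem derKer_le_Jq (S : BraidedStr θ q) : derKer q ≤ Jq S :=
  le_sSup (derKer_isPreNicholsIdeal S)

end NicholsIdeal

section Existence

variable {θ : ℕ} (q : Fin θ → Fin θ → ℂˣ)

/-- Right multiplication by `c ⊗ 1` in the braided tensor product. -/
def braidedMulRight : TV θ →ₗ[ℂ] Module.End ℂ (TV θ ⊗[ℂ] TV θ) :=
  (wordBasis θ).constr ℂ fun w =>
    TensorProduct.map (LinearMap.mulRight ℂ (wordElem θ w)) (actR q (degW θ w))

theorem braidedMulRight_word (w : List (Fin θ)) :
    braidedMulRight q (wordElem θ w) =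
      TensorProduct.map (LinearMap.mulRight ℂ (wordElem θ w)) (actR q (degW θ w)) := by
  rw [← wordBasis_apply, braidedMulRight, Module.Basis.constr_basis, wordBasis_apply]

/-- The multiplication of the braided tensor product. -/
def braidedMul : TV θ ⊗[ℂ] TV θ →ₗ[ℂ] TV θ ⊗[ℂ] TV θ →ₗ[ℂ] TV θ ⊗[ℂ] TV θ :=
  (TensorProduct.lift (LinearMap.mk₂ ℂ
    (fun c d => TensorProduct.map LinearMap.id (LinearMap.mulRight ℂ d) ∘ₗ braidedMulRight q c)
    (fun c c' d => by rw [map_add]; exact LinearMap.comp_add _ _ _)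
    (fun r c d => by rw [map_smul]; exact LinearMap.comp_smul _ _ _)
    (fun c d d' => by
      rw [← LinearMap.add_comp, ← TensorProduct.map_add_right]
      congr 2; ext; simp [mul_add])
    (fun r c d => by
      rw [← LinearMap.smul_comp, ← TensorProduct.map_smul_right]
      congr 2; ext; simp))).flip

theorem braidedMul_word (a b d : TV θ) (w : List (Fin θ)) :
    braidedMul q (a ⊗ₜ b) (wordElem θ w ⊗ₜ d) =
      (a * wordElem θ w) ⊗ₜ (actR q (degW θ w) b * d) := by
  simp [braidedMul, braidedMulRight_word]

theorem primMul_braidedMul (a : Fin θ) (z : TV θ ⊗[ℂ] TV θ) :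
    braidedMul q (primMul q (δ θ a) (gen θ a) z) =
      primMul q (δ θ a) (gen θ a) ∘ₗ braidedMul q z := by
  have : braidedMul q ∘ₗ primMul q (δ θ a) (gen θ a) =
      LinearMap.llcomp ℂ _ _ _ (primMul q (δ θ a) (gen θ a)) ∘ₗ braidedMul q := by
    refine word_tmul_ext fun v w => word_tmul_ext fun c d => ?_
    simp only [LinearMap.comp_apply, LinearMap.llcomp_apply, primMul_tmul, map_add,
      LinearMap.add_apply, braidedMul_word, actL_word, actR_word, smul_mul_assoc,
      ← TensorProduct.smul_tmul', TensorProduct.tmul_smul, ← wordElem_cons, ← wordElem_append,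
      degW_cons, degW_append, qf_add_left, qf_add_right, map_smul, LinearMap.smul_apply, smul_smul,
      smul_add, List.cons_append]
    congr 2
    ring
  exact LinearMap.congr_fun this z

/-- Left multiplication by the coproduct in the braided tensor product. -/
def coprodMul : TV θ →ₐ[ℂ] Module.End ℂ (TV θ ⊗[ℂ] TV θ) :=
  FreeAlgebra.lift ℂ fun a => primMul q (δ θ a) (gen θ a)

theorem coprodMul_gen (a : Fin θ) : coprodMul q (gen θ a) = primMul q (δ θ a) (gen θ a) := by
  exact FreeAlgebra.lift_ι_apply _ _

theorem coprodMul_eq (u : TV θ) :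
    braidedMul q (coprodMul q u (1 ⊗ₜ 1)) = coprodMul q u := by
  have : braidedMul q ∘ₗ LinearMap.applyₗ (1 ⊗ₜ 1) ∘ₗ (coprodMul q).toLinearMap =
      (coprodMul q).toLinearMap := by
    refine gen_mul_ext ?_ fun a y h => ?_
    · refine word_tmul_ext fun v w => ?_
      have : actR q (degW θ v) 1 = 1 := by
        rw [actR_homog q one_mem_homogD, qf_zero_left, one_smul]
      simp [braidedMul_word, this]
    · simp only [LinearMap.comp_apply, AlgHom.toLinearMap_apply, LinearMap.applyₗ_apply_apply,
        map_mul, Module.End.mul_apply, coprodMul_gen, primMul_braidedMul] at h ⊢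
      rw [h]; rfl
  exact LinearMap.congr_fun this u

/-- The braided bialgebra structure of `T(V)`. -/
def braidedStr : BraidedStr θ q where
  Δ := LinearMap.applyₗ (1 ⊗ₜ 1) ∘ₗ (coprodMul q).toLinearMap
  mulB := braidedMul q
  mulB_spec a d wb wc := by
    rw [braidedMul_word, actR_word, smul_mul_assoc, TensorProduct.tmul_smul]
  Δ_one := by simp
  Δ_gen i := by simp [coprodMul_gen, primMul_tmul, actL_one]
  Δ_mul u v := by
    simp only [LinearMap.comp_apply, AlgHom.toLinearMap_apply, LinearMap.applyₗ_apply_apply,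
        map_mul, Module.End.mul_apply, coprodMul_eq]

end Existence

section PreNichols

variable {θ : ℕ} {q : Fin θ → Fin θ → ℂˣ} {S : BraidedStr θ q} {I : Submodule ℂ (TV θ)}

theorem coeff_homogTot {n : ℕ} {v : List (Fin θ)} (h : v.length ≠ n) {x : TV θ}
    (hx : x ∈ homogTot θ n) : coeff v x = 0 := by
  induction hx using Submodule.span_induction with
  | mem x hx =>
    obtain ⟨w, rfl, rfl⟩ := hx
    rw [coeff_word, if_neg]
    rintro rfl
    exact h rfl
  | zero => simp
  | add x y _ _ hx hy => rw [map_add, hx, hy, add_zero]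
  | smul c x _ hx => rw [map_smul, hx, smul_zero]

theorem IsPreNicholsIdeal.coeff_eq_zero (hI : IsPreNicholsIdeal S I) {v : List (Fin θ)}
    (hv : v.length < 2) {x : TV θ} (hx : x ∈ I) : coeff v x = 0 := by
  replace hx := hI.homog_ge2.le hx
  induction hx using Submodule.span_induction with
  | mem x hx =>
    obtain ⟨_, n, hn, hx⟩ := hx
    exact coeff_homogTot (by omega) hx
  | zero => simp
  | add x y _ _ hx hy => rw [map_add, hx, hy, add_zero]
  | smul c x _ hx => rw [map_smul, hx, smul_zero]

theorem IsPreNicholsIdeal.lenProj_mem (hI : IsPreNicholsIdeal S I) (n : ℕ) {x : TV θ}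
    (hx : x ∈ I) : lenProj θ n x ∈ I := by
  replace hx := hI.homog_ge2.le hx
  induction hx using Submodule.span_induction with
  | mem x hx =>
    obtain ⟨hxI, m, hm, hx⟩ := hx
    rw [lenProj_homogTot hx]
    split_ifs
    exacts [hxI, I.zero_mem]
  | zero => simp
  | add x y _ _ hx hy => rw [map_add]; exact I.add_mem hx hy
  | smul c x _ hx => rw [map_smul]; exact I.smul_mem _ hx

/-- Slicing the second tensor factor of `I ⊗ T(V) + T(V) ⊗ I` by a form vanishing on `I`. -/
theorem rid_map_mem {f : TV θ →ₗ[ℂ] ℂ} (hf : ∀ x ∈ I, f x = 0) {z : TV θ ⊗[ℂ] TV θ}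
    (hz : z ∈ mixedSub I) :
    TensorProduct.rid ℂ _ (TensorProduct.map LinearMap.id f z) ∈ I := by
  have : mixedSub I ≤ I.comap
      ((TensorProduct.rid ℂ (TV θ)).toLinearMap ∘ₗ TensorProduct.map LinearMap.id f) := by
    refine mixedSub_le (fun a b ha => ?_) (fun a b hb => ?_)
    · simpa using I.smul_mem _ ha
    · simp [hf b hb]
  exact this hz

theorem lid_map_mem {f : TV θ →ₗ[ℂ] ℂ} (hf : ∀ x ∈ I, f x = 0) {z : TV θ ⊗[ℂ] TV θ}
    (hz : z ∈ mixedSub I) :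
    TensorProduct.lid ℂ _ (TensorProduct.map f LinearMap.id z) ∈ I := by
  have : mixedSub I ≤ I.comap
      ((TensorProduct.lid ℂ (TV θ)).toLinearMap ∘ₗ TensorProduct.map f LinearMap.id) := by
    refine mixedSub_le (fun a b ha => ?_) (fun a b hb => ?_)
    · simp [hf a ha]
    · simpa using I.smul_mem _ hb
  exact this hz

theorem IsPreNicholsIdeal.skewDer_mem (hI : IsPreNicholsIdeal S I) (b : Fin θ) {x : TV θ}
    (hx : x ∈ I) : skewDer q b x ∈ I := by
  rw [← skewDer_eq_coprod S]
  exact rid_map_mem (fun y hy => hI.coeff_eq_zero (by simp) hy) (hI.coideal x hx)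

/-- A submonoid of `ℕ₀^θ` containing the canonical basis is everything. -/
theorem degree_induction {p : (Fin θ → ℕ) → Prop} (h0 : p 0) (hδ : ∀ a, p (δ θ a))
    (hadd : ∀ d e, p d → p e → p (d + e)) (d : Fin θ → ℕ) : p d := by
  let M : AddSubmonoid (Fin θ → ℕ) :=
    { carrier := {d | p d}, zero_mem' := h0, add_mem' := fun {a b} ha hb => hadd a b ha hb }
  have hd : d = ∑ a, d a • δ θ a := by
    ext b
    simp [Finset.sum_apply, δ]
  have : d ∈ M := by
    rw [hd]
    exact sum_mem fun a _ => AddSubmonoid.nsmul_mem M (hδ a) _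
  exact this

theorem IsPreNicholsIdeal.actL_mem (hI : IsPreNicholsIdeal S I) (d : Fin θ → ℕ) {x : TV θ}
    (hx : x ∈ I) : actL q d x ∈ I := by
  induction d using degree_induction generalizing x with
  | h0 => rwa [actL_zero]
  | hadd d e hd he => rw [actL_add]; exact hd (he hx)
  | hδ a =>
    have h := hI.skewDer_mem a (hI.mul_left (gen θ a) x hx)
    rw [skewDer_gen_mul, if_pos rfl] at h
    exact (I.add_mem_iff_right (hI.mul_left _ _ (hI.skewDer_mem a hx))).1 h

theorem lid_coprod_mul_gen (S : BraidedStr θ q) (a : Fin θ) (y : TV θ) :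
    TensorProduct.lid ℂ _ (TensorProduct.map (coeff [a]) LinearMap.id (S.Δ (y * gen θ a))) =
      TensorProduct.lid ℂ _ (TensorProduct.map (coeff [a]) LinearMap.id (S.Δ y)) * gen θ a +
        actR q (δ θ a) y := by
  have h2 : actR q (δ θ a) y = actR q (δ θ a)
      (TensorProduct.lid ℂ _ (TensorProduct.map (coeff []) LinearMap.id (S.Δ y))) := by
    rw [counit_left]
  rw [h2, S.Δ_mul, S.Δ_gen]
  generalize S.Δ y = z
  induction z using TensorProduct.induction_on with
  | zero => simp
  | add x y hx hy =>
    rw [map_add S.mulB, LinearMap.add_apply, map_add, map_add, hx, hy]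
    simp only [map_add, add_mul]
    abel
  | tmul u v =>
    have h1 := mulB_tmul_word S u v 1 [a]
    have h0 := mulB_tmul_word S u v (gen θ a) []
    rw [wordElem_singleton, degW_cons, degW_nil, add_zero] at h1
    rw [wordElem_nil, degW_nil, actR_zero] at h0
    rw [map_add, h1, h0]
    simp [coeff_singleton_mul_gen, add_comm]

theorem IsPreNicholsIdeal.actR_mem (hI : IsPreNicholsIdeal S I) (d : Fin θ → ℕ) {x : TV θ}
    (hx : x ∈ I) : actR q d x ∈ I := by
  induction d using degree_induction generalizing x with
  | h0 => rwa [actR_zero]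
  | hadd d e hd he => rw [actR_add]; exact hd (he hx)
  | hδ a =>
    have hf : ∀ y ∈ I, coeff [a] y = 0 := fun y hy => hI.coeff_eq_zero (by simp) hy
    have h := lid_map_mem hf (hI.coideal _ (hI.mul_right (gen θ a) x hx))
    rw [lid_coprod_mul_gen] at h
    exact (I.add_mem_iff_right (hI.mul_right _ _ (lid_map_mem hf (hI.coideal x hx)))).1 h

theorem IsPreNicholsIdeal.primMul_mem (hI : IsPreNicholsIdeal S I) (e : Fin θ → ℕ) (y : TV θ)
    {z : TV θ ⊗[ℂ] TV θ} (hz : z ∈ mixedSub I) : primMul q e y z ∈ mixedSub I := by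
  have : mixedSub I ≤ (mixedSub I).comap (primMul q e y) := by
    refine mixedSub_le (fun a b ha => ?_) (fun a b hb => ?_)
    · rw [Submodule.mem_comap, primMul_tmul]
      exact Submodule.add_mem _ (tmul_mem_mixedSub_left (hI.mul_left _ _ ha) _)
        (tmul_mem_mixedSub_left (hI.actL_mem _ ha) _)
    · rw [Submodule.mem_comap, primMul_tmul]
      exact Submodule.add_mem _ (tmul_mem_mixedSub_right _ hb)
        (tmul_mem_mixedSub_right _ (hI.mul_left _ _ hb))
  exact this hz

theorem IsPreNicholsIdeal.mulB_mem (hI : IsPreNicholsIdeal S I) {m : TV θ ⊗[ℂ] TV θ}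
    (hm : m ∈ mixedSub I) (z : TV θ ⊗[ℂ] TV θ) : S.mulB m z ∈ mixedSub I := by
  have h : (mixedSub I).mkQ ∘ₗ S.mulB m = 0 := by
    refine word_tmul_ext fun v w => ?_
    rw [LinearMap.comp_apply, LinearMap.zero_apply, Submodule.mkQ_apply,
      Submodule.Quotient.mk_eq_zero]
    have : mixedSub I ≤ (mixedSub I).comap (S.mulB.flip (wordElem θ v ⊗ₜ wordElem θ w)) := by
      refine mixedSub_le (fun a b ha => ?_) (fun a b hb => ?_)
      · rw [Submodule.mem_comap, LinearMap.flip_apply, mulB_tmul_word]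
        exact tmul_mem_mixedSub_left (hI.mul_right _ _ ha) _
      · rw [Submodule.mem_comap, LinearMap.flip_apply, mulB_tmul_word]
        exact tmul_mem_mixedSub_right _ (hI.mul_right _ _ (hI.actR_mem _ hb))
    exact this hm
  have := LinearMap.congr_fun h z
  rwa [LinearMap.comp_apply, LinearMap.zero_apply, Submodule.mkQ_apply,
      Submodule.Quotient.mk_eq_zero] at this

end PreNichols

section Growth

variable {θ θ' : ℕ} {q : Fin θ → Fin θ → ℂˣ} {S : BraidedStr θ q} {I : Submodule ℂ (TV θ)}
  {q' : Fin θ' → Fin θ' → ℂˣ} {y : Fin θ' → TV θ} {d : Fin θ' → Fin θ → ℕ}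

/-- The algebra map sending the generators to a given family. -/
def genLift (y : Fin θ' → TV θ) : TV θ' →ₐ[ℂ] TV θ := FreeAlgebra.lift ℂ y

theorem genLift_gen (y : Fin θ' → TV θ) (b : Fin θ') : genLift y (gen θ' b) = y b :=
  FreeAlgebra.lift_ι_apply _ _

theorem actL_genLift (hd : ∀ b, y b ∈ homogD θ (d b))
    (hq' : ∀ b c, (q' b c : ℂ) = qf q (d b) (d c)) (b : Fin θ') (x : TV θ') :
    genLift y (actL q' (δ θ' b) x) = actL q (d b) (genLift y x) := by
  have : (genLift y).toLinearMap ∘ₗ actL q' (δ θ' b) =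
      actL q (d b) ∘ₗ (genLift y).toLinearMap := by
    refine gen_mul_ext (by simp [actL_one]) fun a x h => ?_
    simp only [LinearMap.comp_apply, AlgHom.toLinearMap_apply] at h ⊢
    rw [actL_gen_mul, map_smul, map_mul, map_mul, actL_mul, genLift_gen, actL_homog q (hd a), h,
      qf_δ, hq', smul_mul_assoc]
  exact LinearMap.congr_fun this x

theorem coprod_genLift_sub_mem (hI : IsPreNicholsIdeal S I) (S' : BraidedStr θ' q')
    (hd : ∀ b, y b ∈ homogD θ (d b)) (hq' : ∀ b c, (q' b c : ℂ) = qf q (d b) (d c))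
    (hprim : ∀ b, S.Δ (y b) - (y b ⊗ₜ 1 + 1 ⊗ₜ y b) ∈ mixedSub I) (x : TV θ') :
    S.Δ (genLift y x) - TensorProduct.map (genLift y).toLinearMap (genLift y).toLinearMap (S'.Δ x)
      ∈ mixedSub I := by
  set φ := (genLift y).toLinearMap with hφ
  have key : (mixedSub I).mkQ ∘ₗ S.Δ ∘ₗ φ = (mixedSub I).mkQ ∘ₗ TensorProduct.map φ φ ∘ₗ S'.Δ := by
    refine gen_mul_ext (by simp [hφ, S.Δ_one, S'.Δ_one]) fun a x h => ?_
    simp only [LinearMap.comp_apply, Submodule.mkQ_apply, Submodule.Quotient.eq] at h ⊢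
    have hmap : ∀ z, TensorProduct.map φ φ (primMul q' (δ θ' a) (gen θ' a) z) =
        primMul q (d a) (y a) (TensorProduct.map φ φ z) := by
      intro z
      induction z using TensorProduct.induction_on with
      | zero => simp
      | add u v hu hv => simp only [map_add, hu, hv]
      | tmul u v =>
        simp [primMul_tmul, hφ, genLift_gen, actL_genLift hd hq']
    rw [coprod_gen_mul, hmap, ← mulB_primitive S (hd a)]
    have h1 := hI.mulB_mem (hprim a) (S.Δ (φ x))
    have h2 := hI.primMul_mem (d a) (y a) h
    rw [← mulB_primitive S (hd a), map_sub] at h2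
    rw [map_sub, LinearMap.sub_apply] at h1
    have h3 : S.Δ (φ (gen θ' a * x)) = S.mulB (S.Δ (y a)) (S.Δ (φ x)) := by
      rw [← S.Δ_mul, hφ]
      simp [genLift_gen]
    rw [h3]
    have := Submodule.add_mem _ h1 h2
    rwa [sub_add_sub_cancel] at this
  have := LinearMap.congr_fun key x
  simp only [LinearMap.comp_apply, Submodule.mkQ_apply, Submodule.Quotient.eq] at this
  exact this

theorem comap_genLift_le_derKer (hI : IsPreNicholsIdeal S I)
    (hd : ∀ b, y b ∈ homogD θ (d b)) (hq' : ∀ b c, (q' b c : ℂ) = qf q (d b) (d c))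
    (hprim : ∀ b, S.Δ (y b) - (y b ⊗ₜ 1 + 1 ⊗ₜ y b) ∈ mixedSub I)
    (hε : ∀ x, coeff [] (genLift y x) = coeff [] x)
    (hf : ∀ b, ∃ f : TV θ →ₗ[ℂ] ℂ, (∀ x ∈ I, f x = 0) ∧ ∀ x, f (genLift y x) = coeff [b] x) :
    I.comap (genLift y).toLinearMap ≤ derKer q' := by
  intro x hx
  rw [Submodule.mem_comap, AlgHom.toLinearMap_apply] at hx
  rw [mem_derKer]
  intro v
  induction v generalizing x with
  | nil => rw [derForm, ← hε]; exact hI.coeff_eq_zero (by simp) hx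
  | cons b v ih =>
    refine ih ?_
    obtain ⟨f, hfI, hfφ⟩ := hf b
    set S' := braidedStr q'
    have key : ∀ z : TV θ' ⊗[ℂ] TV θ', genLift y (TensorProduct.rid ℂ _
        (TensorProduct.map LinearMap.id (coeff [b]) z)) = TensorProduct.rid ℂ _
        (TensorProduct.map LinearMap.id f
          (TensorProduct.map (genLift y).toLinearMap (genLift y).toLinearMap z)) := by
      intro z
      induction z using TensorProduct.induction_on with
      | zero => simp
      | add u v hu hv => simp only [map_add, hu, hv]
      | tmul u v => simp [hfφ]
    rw [← skewDer_eq_coprod S', key]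
    refine rid_map_mem hfI ?_
    have := Submodule.sub_mem _ (hI.coideal _ hx) (coprod_genLift_sub_mem hI S' hd hq' hprim x)
    rwa [sub_sub_cancel] at this

theorem finrank_map_le_of_ker_le {V A B : Type*} [AddCommGroup V] [Module ℂ V] [AddCommGroup A]
    [Module ℂ A] [AddCommGroup B] [Module ℂ B] {f : V →ₗ[ℂ] A} {g : V →ₗ[ℂ] B}
    (h : LinearMap.ker g ≤ LinearMap.ker f) (W : Submodule ℂ V) [FiniteDimensional ℂ W] :
    Module.finrank ℂ (W.map f) ≤ Module.finrank ℂ (W.map g) := by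
  have hf := LinearMap.finrank_range_add_finrank_ker (f.domRestrict W)
  have hg := LinearMap.finrank_range_add_finrank_ker (g.domRestrict W)
  have hle : LinearMap.ker (g.domRestrict W) ≤ LinearMap.ker (f.domRestrict W) :=
    fun x hx => h hx
  have := Submodule.finrank_mono hle
  rw [LinearMap.range_domRestrict] at hf hg
  omega

theorem Wfil_mul {m n : ℕ} {x y : TV θ} (hx : x ∈ Wfil θ m) (hy : y ∈ Wfil θ n) :
    x * y ∈ Wfil θ (m + n) := by
  have := Submodule.mul_mem_mul hx hy
  rw [Wfil, Wfil, Submodule.span_mul_span] at this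
  refine Submodule.span_mono ?_ this
  rintro _ ⟨_, ⟨v, hv, rfl⟩, _, ⟨w, hw, rfl⟩, rfl⟩
  refine ⟨v ++ w, ?_, (wordElem_append _ _).symm⟩
  rw [List.length_append]; omega

theorem Wfil_mono {m n : ℕ} (h : m ≤ n) : Wfil θ m ≤ Wfil θ n :=
  Submodule.span_mono fun _ ⟨w, hw, hx⟩ => ⟨w, hw.trans h, hx⟩

theorem one_mem_Wfil (n : ℕ) : (1 : TV θ) ∈ Wfil θ n :=
  Submodule.subset_span ⟨[], by simp, wordElem_nil.symm⟩

instance Wfil_finiteDimensional (n : ℕ) : FiniteDimensional ℂ (Wfil θ n) := by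
  refine FiniteDimensional.span_of_finite ℂ ?_
  refine ((List.finite_length_le (Fin θ) n).image (wordElem θ)).subset ?_
  rintro _ ⟨w, hw, rfl⟩
  exact ⟨w, hw, rfl⟩

theorem FinGK_Jq_of_comap_le (S' : BraidedStr θ' q') {N : ℕ} (hy : ∀ b, y b ∈ Wfil θ N)
    (hle : I.comap (genLift y).toLinearMap ≤ Jq S') (hGK : FinGK I) : FinGK (Jq S') := by
  obtain ⟨C, e, hC⟩ := hGK
  refine ⟨C * (N + 1) ^ e, e, fun m => ?_⟩
  have hword : ∀ w : List (Fin θ'), genLift y (wordElem θ' w) ∈ Wfil θ (N * w.length) := by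
    intro w
    induction w with
    | nil => rw [wordElem_nil, map_one]; exact one_mem_Wfil _
    | cons a w ih =>
      rw [wordElem_cons, map_mul, genLift_gen]
      have := Wfil_mul (hy a) ih
      rwa [List.length_cons, mul_add, mul_one, add_comm]
  have hmap : (Wfil θ' m).map (I.mkQ ∘ₗ (genLift y).toLinearMap) ≤
      (Wfil θ (N * m)).map I.mkQ := by
    rw [Submodule.map_comp]
    refine Submodule.map_mono ?_
    rw [Wfil, Submodule.map_span_le]
    rintro _ ⟨w, hw, rfl⟩
    exact Wfil_mono (Nat.mul_le_mul_left _ hw) (hword w)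
  calc Module.finrank ℂ ((Wfil θ' m).map (Jq S').mkQ)
      ≤ Module.finrank ℂ ((Wfil θ' m).map (I.mkQ ∘ₗ (genLift y).toLinearMap)) := by
        refine finrank_map_le_of_ker_le ?_ _
        rw [Submodule.ker_mkQ, LinearMap.ker_comp, Submodule.ker_mkQ]
        exact hle
    _ ≤ Module.finrank ℂ ((Wfil θ (N * m)).map I.mkQ) := Submodule.finrank_mono hmap
    _ ≤ C * (N * m + 1) ^ e := hC _
    _ ≤ C * ((N + 1) * (m + 1)) ^ e := by gcongr; nlinarith
    _ = C * (N + 1) ^ e * (m + 1) ^ e := by rw [mul_pow, mul_assoc]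

end Growth

section Primitive

variable {θ : ℕ} {q : Fin θ → Fin θ → ℂˣ} {S : BraidedStr θ q} {I : Submodule ℂ (TV θ)}

theorem homogD_le_homogTot {d : Fin θ → ℕ} {n : ℕ} (h : ∑ a, d a = n) :
    homogD θ d ≤ homogTot θ n :=
  Submodule.span_mono fun _ ⟨w, hw, hx⟩ => ⟨w, by rw [length_eq_sum_degW, hw, h], hx⟩

theorem homogTot_le_Wfil (n : ℕ) : homogTot θ n ≤ Wfil θ n :=
  Submodule.span_mono fun _ ⟨w, hw, hx⟩ => ⟨w, hw.le, hx⟩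

theorem homogTot_mul {m n : ℕ} {x y : TV θ} (hx : x ∈ homogTot θ m) (hy : y ∈ homogTot θ n) :
    x * y ∈ homogTot θ (m + n) := by
  have := Submodule.mul_mem_mul hx hy
  rw [homogTot, homogTot, Submodule.span_mul_span] at this
  refine Submodule.span_mono ?_ this
  rintro _ ⟨_, ⟨v, rfl, rfl⟩, _, ⟨w, rfl, rfl⟩, rfl⟩
  exact ⟨v ++ w, List.length_append, (wordElem_append _ _).symm⟩

theorem coeff_homogTot_mul {n : ℕ} {v : List (Fin θ)} (h : v.length < n) {x : TV θ}
    (hx : x ∈ homogTot θ n) (z : TV θ) : coeff v (x * z) = 0 := by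
  have : coeff v ∘ₗ LinearMap.mulLeft ℂ x = 0 := word_ext fun w =>
    coeff_homogTot (n := n + w.length) (by omega)
      (homogTot_mul hx (Submodule.subset_span ⟨w, rfl, rfl⟩))
  exact LinearMap.congr_fun this z

theorem gen_mem_homogTot (a : Fin θ) : gen θ a ∈ homogTot θ 1 :=
  Submodule.subset_span ⟨[a], rfl, (wordElem_singleton a).symm⟩

theorem notMem_sup_span_pow (hI : IsPreNicholsIdeal S I) {γ : Fin θ → ℕ} {w : TV θ}
    (hw : w ∈ homogD θ γ) (hwI : w ∉ I) {n : ℕ} {s t : Fin θ}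
    (hst : qf q (δ θ t) γ * qf q γ (δ θ t) ≠ qtil q s t ^ n) :
    w ∉ I ⊔ Submodule.span ℂ {gen θ s ^ n} := by
  intro h
  obtain ⟨r, hr, u, hu, hru⟩ := Submodule.mem_sup.1 h
  obtain ⟨c, rfl⟩ := Submodule.mem_span_singleton.1 hu
  have hpow : ∀ n : ℕ, gen θ s ^ n ∈ homogD θ (n • δ θ s) := by
    intro n
    induction n with
    | zero => rw [pow_zero, zero_smul]; exact one_mem_homogD
    | succ n ih => rw [pow_succ, succ_nsmul]; exact mul_mem_homogD ih (gen_mem_homogD s)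
  have hτ := hI.actL_mem (δ θ t) (hI.actR_mem (δ θ t) hr)
  have hrw : r = w - c • gen θ s ^ n := by rw [← hru]; abel
  have h2 := I.sub_mem hτ (I.smul_mem (qtil q s t ^ n) hr)
  have h3 : actL q (δ θ t) (actR q (δ θ t) r) - qtil q s t ^ n • r =
      (qf q (δ θ t) γ * qf q γ (δ θ t) - qtil q s t ^ n) • w := by
    rw [hrw, map_sub, map_sub, map_smul, map_smul, actR_homog q hw, actR_homog q (hpow n),
      map_smul, map_smul, actL_homog q hw, actL_homog q (hpow n), qf_nsmul_left, qf_nsmul_right,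
      qf_δ, qf_δ, qtil, mul_pow]
    module
  rw [h3] at h2
  exact hwI ((I.smul_mem_iff (sub_ne_zero.2 hst)).1 h2)

theorem genLift_word_mem_homogTot {y : Fin 2 → TV θ} {n : ℕ} (h0 : y 0 ∈ homogTot θ 1)
    (h1 : y 1 ∈ homogTot θ n) (v : List (Fin 2)) :
    genLift y (wordElem 2 v) ∈ homogTot θ (v.count 0 + n * v.count 1) := by
  induction v with
  | nil =>
    rw [wordElem_nil, map_one]
    exact Submodule.subset_span ⟨[], rfl, wordElem_nil.symm⟩
  | cons a v ih =>
    rw [wordElem_cons, map_mul, genLift_gen]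
    fin_cases a
    · have := homogTot_mul h0 ih
      convert this using 2
      · simp only [Fin.zero_eta, List.count_cons_self, ne_eq, zero_ne_one, not_false_eq_true,
          List.count_cons_of_ne]
        ring
      · rfl
    · have := homogTot_mul h1 ih
      convert this using 2
      · simp only [Fin.mk_one, List.count_cons_self, ne_eq, one_ne_zero, not_false_eq_true,
          List.count_cons_of_ne]
        ring
      · rfl

theorem exists_form_eq_coeff_one (hI : IsPreNicholsIdeal S I) {w : TV θ} {n : ℕ} (hn : 2 ≤ n)
    (hw : w ∈ homogTot θ n) {s : Fin θ} (hsup : w ∉ I ⊔ Submodule.span ℂ {gen θ s ^ n}) :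
    ∃ f : TV θ →ₗ[ℂ] ℂ, (∀ x ∈ I, f x = 0) ∧
      ∀ x, f (genLift ![gen θ s, w] x) = coeff [1] x := by
  obtain ⟨f, hfw, hf⟩ := Submodule.exists_dual_map_eq_bot_of_notMem hsup inferInstance
  have hf' : ∀ x ∈ I ⊔ Submodule.span ℂ {gen θ s ^ n}, f x = 0 := fun x hx => by
    have := Submodule.mem_map_of_mem (f := f) hx
    rwa [hf, Submodule.mem_bot] at this
  refine ⟨(f w)⁻¹ • f ∘ₗ lenProj θ n, fun x hx => ?_, fun x => ?_⟩
  · rw [LinearMap.smul_apply, LinearMap.comp_apply,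
      hf' _ (Submodule.mem_sup_left (hI.lenProj_mem n hx)), smul_zero]
  · have : ((f w)⁻¹ • f ∘ₗ lenProj θ n) ∘ₗ (genLift ![gen θ s, w]).toLinearMap = coeff [1] :=
      word_ext fun v => by
        have hmem := genLift_word_mem_homogTot (y := ![gen θ s, w]) (gen_mem_homogTot s) hw v
        rw [LinearMap.comp_apply, LinearMap.smul_apply, LinearMap.comp_apply,
          AlgHom.toLinearMap_apply, lenProj_homogTot hmem, coeff_word]
        by_cases hv1 : v = [1]
        · subst hv1
          simp [wordElem_singleton, genLift_gen, hfw]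
        rw [if_neg hv1]
        split_ifs with hlen
        · have hmul : v.count 1 = 0 := by
            by_contra hne
            have hc : v.count 1 = 1 := by
              have : n * v.count 1 ≤ n * 1 := by omega
              have := Nat.le_of_mul_le_mul_left this (by omega)
              omega
            rw [hc] at hlen
            have hl : v.length = 1 := by
              have := length_eq_sum_degW v
              rw [Fin.sum_univ_two] at this
              simp only [degW] at this
              omega
            obtain ⟨a, rfl⟩ := List.length_eq_one_iff.1 hl
            fin_cases a
            · simp at hc
            · exact hv1 rfl
          have hrep : v = List.replicate n 0 := by
            refine List.eq_replicate_iff.2 ⟨?_, fun b hb => ?_⟩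
            · have := length_eq_sum_degW v
              rw [Fin.sum_univ_two] at this
              simp only [degW] at this
              rw [hmul, mul_zero] at hlen
              omega
            · fin_cases b
              · rfl
              · exact absurd hb (List.count_eq_zero.1 hmul)
          have hpow : genLift ![gen θ s, w] (wordElem 2 (List.replicate n 0)) = gen θ s ^ n := by
            rw [wordElem, List.map_replicate, List.prod_replicate, map_pow, genLift_gen]
            rfl
          rw [hrep, hpow, hf' _ (Submodule.mem_sup_right (Submodule.mem_span_singleton_self _)),
            smul_zero]
        · rw [map_zero, smul_zero]
    exact LinearMap.congr_fun this x

/-- A homogeneous element of degree `γ`, primitive modulo `I`, vanishes in a pre-Nichols algebra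
of finite GKdim if together with some `x_s` it spans a braided vector space with infinite root
system and is not forced to be proportional to a power of `x_s`. -/
theorem mem_of_primitive (hAAH : AAH) (hI : IsPreNicholsIdeal S I) (hGK : FinGK I)
    {γ : Fin θ → ℕ} {n : ℕ} (hγ : ∑ a, γ a = n) (hn : 2 ≤ n) {w : TV θ} (hw : w ∈ homogD θ γ)
    (hprim : S.Δ w - (w ⊗ₜ 1 + 1 ⊗ₜ w) ∈ mixedSub I) {s t : Fin θ}
    (hst : qf q (δ θ t) γ * qf q γ (δ θ t) ≠ qtil q s t ^ n) {q' : Fin 2 → Fin 2 → ℂˣ}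
    (hq' : ∀ b c, (q' b c : ℂ) = qf q (![δ θ s, γ] b) (![δ θ s, γ] c))
    (hinf : ¬ FiniteRootSystem q') : w ∈ I := by
  by_contra hwI
  refine hinf (hAAH 2 q' (braidedStr q') ?_)
  have hwn := homogD_le_homogTot hγ hw
  have hpos : ∀ b, ∃ m, 0 < m ∧ ![gen θ s, w] b ∈ homogTot θ m := by
    intro b
    fin_cases b
    · exact ⟨1, one_pos, gen_mem_homogTot s⟩
    · exact ⟨n, by omega, hwn⟩
  have hε : ∀ x, coeff [] (genLift ![gen θ s, w] x) = coeff [] x := by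
    intro x
    have : coeff [] ∘ₗ (genLift ![gen θ s, w]).toLinearMap = coeff [] := by
      refine gen_mul_ext (by simp [coeff_nil_one]) fun b y _ => ?_
      obtain ⟨m, hm, hb⟩ := hpos b
      rw [LinearMap.comp_apply, AlgHom.toLinearMap_apply, map_mul, genLift_gen,
        coeff_nil_gen_mul, coeff_homogTot_mul hm hb]
    exact LinearMap.congr_fun this x
  refine FinGK_Jq_of_comap_le (y := ![gen θ s, w]) (N := n) _ ?_ (le_trans
    (comap_genLift_le_derKer (d := ![δ θ s, γ]) hI ?_ hq' ?_ hε ?_) (derKer_le_Jq _)) hGK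
  · intro b
    fin_cases b
    · exact Wfil_mono (by omega) (homogTot_le_Wfil 1 (gen_mem_homogTot s))
    · exact homogTot_le_Wfil n hwn
  · intro b
    fin_cases b
    · exact gen_mem_homogD s
    · exact hw
  · intro b
    fin_cases b
    · change S.Δ (gen θ s) - (gen θ s ⊗ₜ 1 + 1 ⊗ₜ gen θ s) ∈ _
      rw [S.Δ_gen, sub_self]
      exact Submodule.zero_mem _
    · exact hprim
  · intro b
    fin_cases b
    · refine ⟨coeff [s], fun x hx => hI.coeff_eq_zero (by simp) hx, fun x => ?_⟩
      have : coeff [s] ∘ₗ (genLift ![gen θ s, w]).toLinearMap = coeff [0] := by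
        refine gen_mul_ext ?_ fun b y _ => ?_
        · have h1 : coeff [s] (1 : TV θ) = 0 := by rw [← wordElem_nil, coeff_word]; simp
          have h2 : coeff [0] (1 : TV 2) = 0 := by rw [← wordElem_nil, coeff_word]; simp
          simp [h1, h2]
        · rw [LinearMap.comp_apply, AlgHom.toLinearMap_apply, map_mul, genLift_gen,
            coeff_singleton_gen_mul]
          fin_cases b
          · change coeff [s] (gen θ s * _) = _
            rw [coeff_singleton_gen_mul, if_pos rfl, hε]
            rfl
          · exact coeff_homogTot_mul (by rw [List.length_singleton]; omega) hwn _
      exact LinearMap.congr_fun this x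
    · exact exists_form_eq_coeff_one hI hn hwn (notMem_sup_span_pow hI hw hwI hst)

end Primitive

section Degree

variable {θ : ℕ} {q : Fin θ → Fin θ → ℂˣ} {S : BraidedStr θ q} {I : Submodule ℂ (TV θ)}

/-- The projection onto the component of degree `d`. -/
def degProj (d : Fin θ → ℕ) : TV θ →ₗ[ℂ] TV θ := diag fun w => if degW θ w = d then 1 else 0

theorem degProj_word (d : Fin θ → ℕ) (w : List (Fin θ)) :
    degProj d (wordElem θ w) = if degW θ w = d then wordElem θ w else 0 := by
  rw [degProj, diag_word, ite_smul, one_smul, zero_smul]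

theorem degProj_mem_homogD (d : Fin θ → ℕ) (x : TV θ) : degProj d x ∈ homogD θ d := by
  have : (homogD θ d).mkQ ∘ₗ degProj d = 0 := word_ext fun w => by
    simp only [LinearMap.comp_apply, degProj_word, LinearMap.zero_apply, Submodule.mkQ_apply,
      Submodule.Quotient.mk_eq_zero]
    split_ifs with h
    · exact Submodule.subset_span ⟨w, h, rfl⟩
    · exact Submodule.zero_mem _
  simpa using LinearMap.congr_fun this x

theorem degProj_homogD {d : Fin θ → ℕ} {x : TV θ} (hx : x ∈ homogD θ d) : degProj d x = x := by
  induction hx using Submodule.span_induction with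
  | mem x h => obtain ⟨w, rfl, rfl⟩ := h; rw [degProj_word, if_pos rfl]
  | zero => simp
  | add x y _ _ hx hy => rw [map_add, hx, hy]
  | smul c x _ hx => rw [map_smul, hx]

theorem degProj_zero (x : TV θ) : degProj 0 x = coeff [] x • (1 : TV θ) := by
  have : degProj (θ := θ) 0 = (coeff []).smulRight 1 := word_ext fun w => by
    rw [degProj_word, LinearMap.smulRight_apply, coeff_word]
    cases w with
    | nil => simp [wordElem_nil, degW_nil]
    | cons a w =>
      rw [if_neg, if_neg (by simp), zero_smul]
      intro h
      have := congrFun h a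
      simp [degW] at this
  rw [this, LinearMap.smulRight_apply]

theorem degProj_mem_derKer (d : Fin θ → ℕ) {x : TV θ} (hx : x ∈ derKer q) :
    degProj d x ∈ derKer q :=
  diag_mem_derKer (fun v w h => by rw [h]) hx

theorem coprod_word_mem (S : BraidedStr θ q) (w : List (Fin θ)) :
    S.Δ (wordElem θ w) ∈ Submodule.span ℂ {z | ∃ u v : List (Fin θ),
      degW θ u + degW θ v = degW θ w ∧ z = wordElem θ u ⊗ₜ[ℂ] wordElem θ v} := by
  induction w with
  | nil =>
    rw [wordElem_nil, S.Δ_one]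
    exact Submodule.subset_span ⟨[], [], by simp [degW_nil], by rw [wordElem_nil]⟩
  | cons a w ih =>
    rw [wordElem_cons, coprod_gen_mul]
    refine (Submodule.map_span_le (primMul q (δ θ a) (gen θ a)) _ _).2 ?_
      (Submodule.mem_map_of_mem ih)
    rintro _ ⟨u, v, huv, rfl⟩
    rw [primMul_tmul, actL_word, ← TensorProduct.smul_tmul', ← wordElem_cons, ← wordElem_cons]
    refine Submodule.add_mem _ (Submodule.subset_span ⟨a :: u, v, ?_, rfl⟩)
      (Submodule.smul_mem _ _ (Submodule.subset_span ⟨u, a :: v, ?_, rfl⟩))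
    · rw [degW_cons, degW_cons, ← huv, add_assoc]
    · rw [degW_cons, degW_cons, ← huv, add_left_comm]

theorem coprod_eq_sum (S : BraidedStr θ q) {γ : Fin θ → ℕ} {x : TV θ} (hx : x ∈ homogD θ γ) :
    S.Δ x = ∑ d ∈ Finset.Icc 0 γ, TensorProduct.map (degProj d) (degProj (γ - d)) (S.Δ x) := by
  induction hx using Submodule.span_induction with
  | mem x h =>
    obtain ⟨w, rfl, rfl⟩ := h
    have := coprod_word_mem S w
    generalize S.Δ (wordElem θ w) = z at this ⊢
    induction this using Submodule.span_induction with
    | mem x h =>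
      obtain ⟨u, v, huv, rfl⟩ := h
      rw [Finset.sum_eq_single (degW θ u)]
      · rw [← huv, add_tsub_cancel_left, TensorProduct.map_tmul, degProj_word, degProj_word,
          if_pos rfl, if_pos rfl]
      · intro d _ hd
        rw [TensorProduct.map_tmul, degProj_word, if_neg hd.symm, TensorProduct.zero_tmul]
      · intro h
        refine absurd (Finset.mem_Icc.2 ⟨zero_le, ?_⟩) h
        rw [← huv]
        exact le_self_add
    | zero => simp
    | add x y _ _ hx hy => simp only [map_add, Finset.sum_add_distrib, ← hx, ← hy]
    | smul c x _ hx => simp only [map_smul, ← Finset.smul_sum, ← hx]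
  | zero => simp
  | add x y _ _ hx hy => simp only [map_add, Finset.sum_add_distrib, ← hx, ← hy]
  | smul c x _ hx => simp only [map_smul, ← Finset.smul_sum, ← hx]

/-- If `I` contains the elements of the Nichols ideal of degrees below `γ`, then those of degree
`γ` are primitive modulo `I`. -/
theorem primitive_of_lower_degrees {γ : Fin θ → ℕ} (hγ : γ ≠ 0)
    (hlow : ∀ d ≤ γ, d ≠ γ → derKer q ⊓ homogD θ d ≤ I) {w : TV θ} (hw : w ∈ homogD θ γ)
    (hwN : w ∈ derKer q) : S.Δ w - (w ⊗ₜ 1 + 1 ⊗ₜ w) ∈ mixedSub I := by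
  have hr : TensorProduct.map (degProj γ) (degProj (γ - γ)) (S.Δ w) = w ⊗ₜ 1 := by
    have : ∀ z : TV θ ⊗[ℂ] TV θ, TensorProduct.map (degProj γ) (degProj (γ - γ)) z =
        degProj γ (TensorProduct.rid ℂ _ (TensorProduct.map LinearMap.id (coeff []) z)) ⊗ₜ 1 := by
      intro z
      induction z using TensorProduct.induction_on with
      | zero => simp
      | add u v hu hv => simp only [map_add, TensorProduct.add_tmul, hu, hv]
      | tmul u v => simp [degProj_zero, TensorProduct.smul_tmul]
    rw [this, counit_right, degProj_homogD hw]
  have hl : TensorProduct.map (degProj 0) (degProj (γ - 0)) (S.Δ w) = 1 ⊗ₜ w := by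
    have : ∀ z : TV θ ⊗[ℂ] TV θ, TensorProduct.map (degProj 0) (degProj (γ - 0)) z =
        1 ⊗ₜ degProj γ
          (TensorProduct.lid ℂ _ (TensorProduct.map (coeff []) LinearMap.id z)) := by
      intro z
      induction z using TensorProduct.induction_on with
      | zero => simp
      | add u v hu hv => simp only [map_add, TensorProduct.tmul_add, hu, hv]
      | tmul u v => simp [degProj_zero, TensorProduct.smul_tmul]
    rw [this, counit_left, degProj_homogD hw]
  have hmid : ∀ d ∈ (Finset.Icc 0 γ \ {0, γ}),
      TensorProduct.map (degProj d) (degProj (γ - d)) (S.Δ w) ∈ mixedSub I := by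
    intro d hd
    simp only [Finset.mem_sdiff, Finset.mem_Icc, Finset.mem_insert, Finset.mem_singleton,
      not_or] at hd
    obtain ⟨⟨_, hdγ⟩, hd0, hdne⟩ := hd
    have : mixedSub (derKer q) ≤ (mixedSub I).comap
        (TensorProduct.map (degProj d) (degProj (γ - d))) := by
      refine mixedSub_le (fun a b ha => ?_) (fun a b hb => ?_)
      · exact tmul_mem_mixedSub_left
          (hlow d hdγ hdne ⟨degProj_mem_derKer d ha, degProj_mem_homogD d a⟩) _
      · refine tmul_mem_mixedSub_right _
          (hlow (γ - d) tsub_le_self ?_ ⟨degProj_mem_derKer _ hb, degProj_mem_homogD _ b⟩)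
        intro h
        refine hd0 (funext fun a => ?_)
        have h1 : γ a - d a = γ a := congrFun h a
        have h2 : d a ≤ γ a := hdγ a
        change d a = 0
        omega
    exact this (derKer_coideal S hwN)
  have hsub : ({0, γ} : Finset (Fin θ → ℕ)) ⊆ Finset.Icc 0 γ := by
    intro d hd
    simp only [Finset.mem_insert, Finset.mem_singleton] at hd
    obtain rfl | rfl := hd <;> simp
  have hsum := coprod_eq_sum S hw
  rw [← Finset.sum_sdiff hsub, Finset.sum_pair hγ.symm, hl, hr] at hsum
  rw [hsum, add_comm (w ⊗ₜ[ℂ] (1 : TV θ)), add_sub_cancel_right]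
  exact Submodule.sum_mem _ hmid

theorem eq_zero_of_mem_derKer {γ : Fin θ → ℕ} (hγ : ∑ a, γ a < 2) {w : TV θ}
    (hw : w ∈ homogD θ γ) (hwN : w ∈ derKer q) : w = 0 := by
  have h := lenProj_homogTot (n := ∑ a, γ a) (homogD_le_homogTot rfl hw)
  rw [if_pos rfl] at h
  rw [← h]
  obtain h0 | h1 : ∑ a, γ a = 0 ∨ ∑ a, γ a = 1 := by omega
  · rw [h0, lenProj_zero, show coeff [] w = 0 from mem_derKer.1 hwN [], zero_smul]
  · rw [h1, lenProj_one]
    refine Finset.sum_eq_zero fun b _ => ?_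
    rw [← derForm_singleton (q := q), mem_derKer.1 hwN, zero_smul]

end Degree

section Diagram

variable {θ : ℕ} {q : Fin θ → Fin θ → ℂˣ} {i j k : Fin θ}

/-- The rank-three diagram with `q_{kk} = q_{jj} = q̃_{ij}⁻¹ = q̃_{jk}⁻¹`, `q̃_{ik} = 1` and
`q_{ii} = q_{kk}⁶`, for `q_{kk} = z` of order nine. -/
structure IsDiagram (q : Fin θ → Fin θ → ℂˣ) (i j k : Fin θ) (z : ℂ) : Prop where
  ij : i ≠ j
  ik : i ≠ k
  jk : j ≠ k
  prim : IsPrimitiveRoot z 9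
  qii : (q i i : ℂ) = z ^ 6
  qjj : (q j j : ℂ) = z
  qkk : (q k k : ℂ) = z
  qij : (q i j : ℂ) * q j i = z ^ 8
  qjk : (q j k : ℂ) * q k j = z ^ 8
  qik : (q i k : ℂ) * q k i = 1

variable {z : ℂ}

theorem IsDiagram.qtil_eq (h : IsDiagram q i j k z) (s t : Fin 3) :
    qtil q (![i, j, k] s) (![i, j, k] t) = z ^ pairExp s t := by
  have hij := h.qij
  have hjk := h.qjk
  have hik := h.qik
  fin_cases s <;> fin_cases t <;> simp [qtil, pairExp, h.qii, h.qjj, h.qkk, hij, hjk, hik,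
    ← pow_two, ← pow_mul, mul_comm (q j i : ℂ), mul_comm (q k j : ℂ), mul_comm (q k i : ℂ)]

theorem link_eq (h : IsDiagram q i j k z) (a b c : ℕ) (t : Fin 3) :
    qf q (δ θ (![i, j, k] t)) (a • δ θ i + b • δ θ j + c • δ θ k) *
      qf q (a • δ θ i + b • δ θ j + c • δ θ k) (δ θ (![i, j, k] t)) =
      z ^ linkExp a b c t := by
  simp only [qf_add_left, qf_add_right, qf_nsmul_left, qf_nsmul_right, qf_δ]
  have h0 := h.qtil_eq t 0
  have h1 := h.qtil_eq t 1
  have h2 := h.qtil_eq t 2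
  simp only [qtil, Matrix.cons_val_zero, Matrix.cons_val_one, Matrix.cons_val] at h0 h1 h2
  generalize ![i, j, k] t = T at *
  calc _ = ((q T i : ℂ) * q i T) ^ a * ((q T j : ℂ) * q j T) ^ b * ((q T k : ℂ) * q k T) ^ c := by
        ring
    _ = z ^ linkExp a b c t := by
        rw [h0, h1, h2, ← pow_mul, ← pow_mul, ← pow_mul, ← pow_add, ← pow_add]
        congr 1
        fin_cases t <;> simp [pairExp, linkExp]

theorem self_eq (h : IsDiagram q i j k z) (a b c : ℕ) :
    qf q (a • δ θ i + b • δ θ j + c • δ θ k) (a • δ θ i + b • δ θ j + c • δ θ k) =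
      z ^ selfExp a b c := by
  simp only [qf_add_left, qf_add_right, qf_nsmul_left, qf_nsmul_right, qf_δ]
  calc _ = (q i i : ℂ) ^ (a * a) * (q j j : ℂ) ^ (b * b) * (q k k : ℂ) ^ (c * c) *
        ((q i j : ℂ) * q j i) ^ (a * b) * ((q j k : ℂ) * q k j) ^ (b * c) *
        ((q i k : ℂ) * q k i) ^ (a * c) := by
        ring
    _ = z ^ selfExp a b c := by
        rw [h.qii, h.qjj, h.qkk, h.qij, h.qjk, h.qik, one_pow, mul_one, ← pow_mul, ← pow_mul,
          ← pow_mul, ← pow_add, ← pow_add, ← pow_add, ← pow_add]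
        rfl

theorem derKer_inf_homogD_le {S : BraidedStr θ q} {I : Submodule ℂ (TV θ)}
    (h : IsDiagram q i j k z) (hAAH : AAH) (hI : IsPreNicholsIdeal S I) (hGK : FinGK I)
    (γ : Fin θ → ℕ) (hγ : γ ≤ 5 • δ θ i + 3 • δ θ j + δ θ k) : derKer q ⊓ homogD θ γ ≤ I := by
  induction hn : ∑ a, γ a using Nat.strong_induction_on generalizing γ with
  | _ n ih =>
    rintro w ⟨hwN, hw⟩
    by_cases hn2 : n < 2
    · rw [eq_zero_of_mem_derKer (hn ▸ hn2) hw hwN]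
      exact I.zero_mem
    have hij := h.ij
    have hik := h.ik
    have hjk := h.jk
    have hi : γ i < 6 := by
      have := hγ i
      simp [δ, hij, hik] at this
      omega
    have hj : γ j < 4 := by
      have := hγ j
      simp [δ, hij.symm, hjk] at this
      omega
    have hk : γ k < 2 := by
      have := hγ k
      simp [δ, hik.symm, hjk.symm] at this
      omega
    have hγeq : γ = γ i • δ θ i + γ j • δ θ j + γ k • δ θ k := by
      ext a
      by_cases hai : a = i
      · subst hai; simp [δ, hij, hik]
      by_cases haj : a = j
      · subst haj; simp [δ, hij.symm, hjk]
      by_cases hak : a = k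
      · subst hak; simp [δ, hik.symm, hjk.symm]
      have := hγ a
      simpa [δ, hai, haj, hak] using this
    have hsum : γ i + γ j + γ k = n := by
      rw [← hn]
      conv_rhs => rw [hγeq]
      simp [δ, Finset.sum_add_distrib]
    have hprim : S.Δ w - (w ⊗ₜ 1 + 1 ⊗ₜ w) ∈ mixedSub I := by
      refine primitive_of_lower_degrees ?_ (fun d hd hne => ?_) hw hwN
      · rintro rfl
        simp at hn
        omega
      · refine ih _ ?_ d (hd.trans hγ) rfl
        rw [← hn]
        refine Finset.sum_lt_sum (fun a _ => hd a) ?_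
        by_contra hcon
        push Not at hcon
        exact hne (le_antisymm hd fun a => hcon a (Finset.mem_univ a))
    obtain ⟨s, t, hst, hinf⟩ := exists_infinite_extension ⟨γ i, hi⟩ ⟨γ j, hj⟩ ⟨γ k, hk⟩
      (by simp only; omega)
    simp only [hsum] at hst hinf
    have hz0 : z ≠ 0 := h.prim.ne_zero (by norm_num)
    let zu : ℂˣ := Units.mk0 z hz0
    have hzu : IsPrimitiveRoot zu 9 := by
      rw [← IsPrimitiveRoot.coe_units_iff]; exact h.prim
    let d : Fin 2 → Fin θ → ℕ := ![δ θ (![i, j, k] s), γ]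
    let q' : Fin 2 → Fin 2 → ℂˣ := fun b c => Units.mk0 (qf q (d b) (d c)) (qf_ne_zero q _ _)
    have hlink := link_eq h (γ i) (γ j) (γ k)
    have hself := self_eq h (γ i) (γ j) (γ k)
    rw [← hγeq] at hlink hself
    have hexp : HasExp zu q' (vertexExp s, linkExp (γ i) (γ j) (γ k) s % 9,
        selfExp (γ i) (γ j) (γ k) % 9) := by
      have hmod : ∀ m, z ^ (m % 9) = z ^ m := fun m => by
        conv_rhs => rw [← Nat.mod_add_div m 9, pow_add, pow_mul, h.prim.pow_eq_one, one_pow,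
          mul_one]
      refine ⟨Units.ext ?_, Units.ext ?_, Units.ext ?_⟩
      · have : (q (![i, j, k] s) (![i, j, k] s) : ℂ) = z ^ vertexExp s := by
          fin_cases s <;> simp [vertexExp, h.qii, h.qjj, h.qkk]
        simpa [q', d, qf_δ, zu] using this
      · simpa [q', d, zu, hmod] using hlink s
      · simpa [q', d, zu, hmod] using hself
    refine mem_of_primitive (q' := q') hAAH hI hGK hn (by omega) hw hprim (s := ![i, j, k] s)
      (t := ![i, j, k] t) ?_ (fun b c => rfl) ?_
    · rw [hlink, h.qtil_eq, ← pow_mul, mul_comm]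
      intro heq
      refine hst ?_
      have heq' : zu ^ linkExp (γ i) (γ j) (γ k) t = zu ^ (n * pairExp s t) :=
        Units.ext (by simpa [zu] using heq)
      exact (pow_eq_pow_iff_mod hzu _ _).1 heq'
    · obtain hinf | hinf := hinf
      · exact not_finiteRootSystem_of_infiniteCheck hzu hexp (by norm_num) (by norm_num) hinf
      · exact not_finiteRootSystem_of_infiniteCheck hzu hexp (by norm_num) (by norm_num) hinf

end Diagram

section Relation

variable {θ : ℕ} {q : Fin θ → Fin θ → ℂˣ}

theorem skewDer_brk (b : Fin θ) {d e : Fin θ → ℕ} {x y : TV θ} (hx : x ∈ homogD θ d)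
    (hy : y ∈ homogD θ e) : skewDer q b (brk q d e x y) =
      x * skewDer q b y + qf q (δ θ b) e • (skewDer q b x * y) -
        qf q d e • (y * skewDer q b x + qf q (δ θ b) d • (skewDer q b y * x)) := by
  rw [brk, map_sub, map_smul, skewDer_mul, skewDer_mul, actL_homog q hx, actL_homog q hy,
    mul_smul_comm, mul_smul_comm]

theorem ad1_mem_homogD (q : Fin θ → Fin θ → ℂˣ) (i : Fin θ) {e : Fin θ → ℕ} {y : TV θ}
    (hy : y ∈ homogD θ e) : ad1 q i e y ∈ homogD θ (δ θ i + e) :=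
  brk_mem_homogD q (gen_mem_homogD i) hy _ _

theorem skewDer_ad1_self (i : Fin θ) {e : Fin θ → ℕ} {y : TV θ} (hy : y ∈ homogD θ e)
    (hyi : skewDer q i y = 0) : skewDer q i (ad1 q i e y) = 0 := by
  rw [ad1, skewDer_brk i (gen_mem_homogD i) hy, hyi, skewDer_gen, if_pos rfl]
  simp

theorem skewDer_ad1_of_ne {i b : Fin θ} (hib : i ≠ b) {e : Fin θ → ℕ} {y : TV θ}
    (hy : y ∈ homogD θ e) : skewDer q b (ad1 q i e y) =
      gen θ i * skewDer q b y - (qf q (δ θ i) e * q b i) • (skewDer q b y * gen θ i) := by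
  rw [ad1, skewDer_brk b (gen_mem_homogD i) hy, skewDer_gen, if_neg hib, qf_δ, mul_smul]
  simp

theorem skewDer_ad1_eq_zero (i : Fin θ) {b : Fin θ} {e : Fin θ → ℕ} {y : TV θ}
    (hy : y ∈ homogD θ e) (hyb : skewDer q b y = 0) : skewDer q b (ad1 q i e y) = 0 := by
  by_cases hib : i = b
  · subst hib
    exact skewDer_ad1_self i hy hyb
  · rw [skewDer_ad1_of_ne hib hy, hyb]
    simp

theorem mem_derKer_of_skewDer {d : Fin θ → ℕ} (hd : d ≠ 0) {x : TV θ} (hx : x ∈ homogD θ d)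
    (h : ∀ b, skewDer q b x ∈ derKer q) : x ∈ derKer q :=
  mem_derKer_iff_skewDer.2 ⟨coeff_nil_homogD hd hx, h⟩

theorem add_δ_ne_zero (i : Fin θ) (e : Fin θ → ℕ) : δ θ i + e ≠ 0 := by
  intro h
  have := congrFun h i
  simp [δ] at this

variable (q) in
/-- The kernel of the skew derivations as a two-sided ideal. -/
def derIdeal : Ideal (TV θ) where
  carrier := derKer q
  add_mem' := (derKer q).add_mem
  zero_mem' := (derKer q).zero_mem
  smul_mem' a _ hx := mul_mem_derKer_left a hx

instance : (derIdeal q).IsTwoSided := ⟨fun b hx => mul_mem_derKer_right b hx⟩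

variable (q) in
/-- The projection of `T(V)` onto its quotient by the kernel of the skew derivations. -/
def derProj : TV θ →ₐ[ℂ] TV θ ⧸ derIdeal q := Ideal.Quotient.mkₐ ℂ (derIdeal q)

theorem derProj_eq_zero {x : TV θ} : derProj q x = 0 ↔ x ∈ derKer q :=
  Ideal.Quotient.eq_zero_iff_mem

theorem mem_derKer_of_derProj {d : Fin θ → ℕ} (hd : d ≠ 0) {x : TV θ} (hx : x ∈ homogD θ d)
    (h : ∀ b, derProj q (skewDer q b x) = 0) : x ∈ derKer q :=
  mem_derKer_of_skewDer hd hx fun b => derProj_eq_zero.1 (h b)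

/-- In the quotient, elements whose braided commutator vanishes commute up to a scalar. -/
theorem derProj_mul_of_brk {d e : Fin θ → ℕ} {x y : TV θ} (h : brk q d e x y ∈ derKer q) :
    derProj q x * derProj q y = qf q d e • (derProj q y * derProj q x) := by
  have := derProj_eq_zero.2 h
  rwa [brk, map_sub, map_smul, map_mul, map_mul, sub_eq_zero] at this

variable {i j k : Fin θ} {z : ℂ}

theorem xw_two (i j : Fin θ) : xw q [i, j] = ad1 q i (δ θ j) (gen θ j) := by
  simp only [xw, degW_cons, degW_nil, add_zero]

theorem xw_cons_two (i j l : Fin θ) :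
    xw q [i, j, l] = ad1 q i (δ θ j + δ θ l) (xw q [j, l]) := by
  simp only [xw, degW_cons, degW_nil, add_zero]

theorem xw_cons_three (i j l m : Fin θ) :
    xw q [i, j, l, m] = ad1 q i (δ θ j + δ θ l + δ θ m) (xw q [j, l, m]) := by
  simp only [xw, degW_cons, degW_nil, add_zero, add_assoc]

theorem xw_two_mem (i j : Fin θ) : xw q [i, j] ∈ homogD θ (δ θ i + δ θ j) :=
  xw_two (q := q) i j ▸ ad1_mem_homogD q i (gen_mem_homogD j)

theorem xw_three_mem (i j l : Fin θ) : xw q [i, j, l] ∈ homogD θ (δ θ i + δ θ j + δ θ l) := by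
  rw [xw_cons_two, add_assoc]
  exact ad1_mem_homogD q i (xw_two_mem j l)

theorem xw_four_mem (i j l m : Fin θ) :
    xw q [i, j, l, m] ∈ homogD θ (δ θ i + δ θ j + δ θ l + δ θ m) := by
  rw [xw_cons_three, add_assoc, add_assoc, ← add_assoc (δ θ j)]
  exact ad1_mem_homogD q i (xw_three_mem j l m)

namespace IsDiagram

theorem skewDer_xw_ij (h : IsDiagram q i j k z) :
    skewDer q j (xw q [i, j]) = (1 - z ^ 8) • gen θ i := by
  rw [xw_two, skewDer_ad1_of_ne h.ij (gen_mem_homogD j), skewDer_gen, if_pos rfl, qf_δ, h.qij]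
  simp only [mul_one, one_mul]
  module

theorem skewDer_xw_ij_of_ne {b : Fin θ} (hb : b ≠ j) : skewDer q b (xw q [i, j]) = 0 := by
  rw [xw_two]
  exact skewDer_ad1_eq_zero i (gen_mem_homogD j) (by rw [skewDer_gen, if_neg hb.symm])

theorem skewDer_xw_iij (h : IsDiagram q i j k z) :
    skewDer q j (xw q [i, i, j]) =
      ((1 - z ^ 8) * (1 - z ^ 14)) • (gen θ i * gen θ i) := by
  rw [xw_cons_two, skewDer_ad1_of_ne h.ij (xw_two_mem i j), h.skewDer_xw_ij, qf_add_right, qf_δ,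
    qf_δ, mul_assoc, h.qij, h.qii, ← pow_add]
  simp only [mul_smul_comm, smul_mul_assoc]
  module

theorem skewDer_xw_iij_of_ne {b : Fin θ} (hb : b ≠ j) : skewDer q b (xw q [i, i, j]) = 0 := by
  rw [xw_cons_two]
  exact skewDer_ad1_eq_zero i (xw_two_mem i j) (skewDer_xw_ij_of_ne hb)

theorem skewDer_xw_jk (h : IsDiagram q i j k z) :
    skewDer q k (xw q [j, k]) = (1 - z ^ 8) • gen θ j := by
  rw [xw_two, skewDer_ad1_of_ne h.jk (gen_mem_homogD k), skewDer_gen, if_pos rfl, qf_δ, h.qjk]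
  simp only [mul_one, one_mul]
  module

theorem skewDer_xw_ijk (h : IsDiagram q i j k z) :
    skewDer q k (xw q [i, j, k]) = (1 - z ^ 8) • xw q [i, j] := by
  rw [xw_cons_two, skewDer_ad1_of_ne h.ik (xw_two_mem j k), h.skewDer_xw_jk, qf_add_right, qf_δ,
    qf_δ, mul_assoc, h.qik, xw_two, ad1, brk, qf_δ]
  simp only [mul_smul_comm, smul_mul_assoc]
  module

theorem skewDer_xw_iijk (h : IsDiagram q i j k z) :
    skewDer q k (xw q [i, i, j, k]) = (1 - z ^ 8) • xw q [i, i, j] := by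
  rw [xw_cons_three, skewDer_ad1_of_ne h.ik (xw_three_mem i j k), h.skewDer_xw_ijk, qf_add_right,
    qf_δ, mul_assoc, h.qik, xw_cons_two i i j, ad1, brk]
  simp only [mul_smul_comm, smul_mul_assoc]
  module

theorem skewDer_xw_iijk_of_ne {b : Fin θ} (hb : b ≠ k) :
    skewDer q b (xw q [i, i, j, k]) = 0 := by
  rw [xw_cons_three]
  refine skewDer_ad1_eq_zero i (xw_three_mem i j k) ?_
  rw [xw_cons_two]
  exact skewDer_ad1_eq_zero i (xw_two_mem j k) (skewDer_xw_ij_of_ne hb)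

theorem sum_qii (h : IsDiagram q i j k z) : 1 + z ^ 6 + z ^ 12 = 0 := by
  have h3 : z ^ 3 ≠ 1 := h.prim.pow_ne_one_of_pos_of_lt (by norm_num) (by norm_num)
  have h9 := h.prim.pow_eq_one
  have : (z ^ 3 - 1) * (1 + z ^ 6 + z ^ 12) = 0 := by
    linear_combination (1 + z ^ 6 - z ^ 3) * h9
  exact (mul_eq_zero.1 this).resolve_left (sub_ne_zero.2 h3)

theorem gen_cube_mem (h : IsDiagram q i j k z) :
    gen θ i * (gen θ i * gen θ i) ∈ derKer q := by
  refine mem_derKer_of_skewDer (add_δ_ne_zero i _)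
    (mul_mem_homogD (gen_mem_homogD i) (mul_mem_homogD (gen_mem_homogD i) (gen_mem_homogD i)))
    fun b => ?_
  have : skewDer q b (gen θ i * (gen θ i * gen θ i)) = 0 := by
    rw [skewDer_mul, skewDer_mul, actL_mul, actL_homog q (gen_mem_homogD i), skewDer_gen]
    split_ifs with hb
    · subst hb
      rw [qf_δ, h.qii]
      simp only [mul_one, one_mul, mul_smul_comm, smul_mul_assoc, mul_add]
      calc _ = (1 + z ^ 6 + z ^ 12) • (gen θ i * gen θ i) := by module
        _ = 0 := by rw [h.sum_qii, zero_smul]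
    · simp
  rw [this]
  exact Submodule.zero_mem _

theorem brk_gen_xw_iij_mem (h : IsDiagram q i j k z) :
    brk q (δ θ i) (δ θ i + δ θ i + δ θ j) (gen θ i) (xw q [i, i, j]) ∈ derKer q := by
  change ad1 q i _ _ ∈ _
  refine mem_derKer_of_skewDer (add_δ_ne_zero i _) (ad1_mem_homogD q i (xw_three_mem i i j))
    fun b => ?_
  by_cases hb : b = j
  · subst hb
    rw [skewDer_ad1_of_ne h.ij (xw_three_mem i i b), h.skewDer_xw_iij, mul_smul_comm,
      smul_mul_assoc, mul_assoc]
    exact Submodule.sub_mem _ (Submodule.smul_mem _ _ h.gen_cube_mem)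
      (Submodule.smul_mem _ _ (Submodule.smul_mem _ _ h.gen_cube_mem))
  · rw [skewDer_ad1_eq_zero i (xw_three_mem i i j) (skewDer_xw_iij_of_ne hb)]
    exact Submodule.zero_mem _

theorem brk_gen_xw_iijk_mem (h : IsDiagram q i j k z) :
    brk q (δ θ i) (δ θ i + δ θ i + δ θ j + δ θ k) (gen θ i) (xw q [i, i, j, k]) ∈ derKer q := by
  change ad1 q i _ _ ∈ _
  refine mem_derKer_of_skewDer (add_δ_ne_zero i _) (ad1_mem_homogD q i (xw_four_mem i i j k))
    fun b => ?_
  by_cases hb : b = k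
  · subst hb
    rw [skewDer_ad1_of_ne h.ik (xw_four_mem i i j b), h.skewDer_xw_iijk, qf_add_right, qf_δ,
      mul_assoc, h.qik, mul_one, mul_smul_comm, smul_mul_assoc, smul_comm _ (1 - z ^ 8),
      ← smul_sub]
    exact Submodule.smul_mem _ _ h.brk_gen_xw_iij_mem
  · rw [skewDer_ad1_eq_zero i (xw_four_mem i i j k) (skewDer_xw_iijk_of_ne hb)]
    exact Submodule.zero_mem _

theorem derProj_gen_mul_xw_ij (i j : Fin θ) :
    derProj q (gen θ i) * derProj q (xw q [i, j]) = derProj q (xw q [i, i, j]) +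
      qf q (δ θ i) (δ θ i + δ θ j) • (derProj q (xw q [i, j]) * derProj q (gen θ i)) := by
  rw [xw_cons_two, ad1, brk, map_sub, map_smul, map_mul, map_mul, sub_add_cancel]

theorem brk_xw_iij_xw_ij_mem (h : IsDiagram q i j k z) :
    brk q (δ θ i + δ θ i + δ θ j) (δ θ i + δ θ j) (xw q [i, i, j]) (xw q [i, j]) ∈ derKer q := by
  refine mem_derKer_of_derProj (fun h0 => ?_)
    (brk_mem_homogD q (xw_three_mem i i j) (xw_two_mem i j) _ _) fun b => ?_
  · simpa [δ] using congrFun h0 i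
  by_cases hb : b = j
  · subst hb
    rw [skewDer_brk b (xw_three_mem i i b) (xw_two_mem i b), h.skewDer_xw_ij, h.skewDer_xw_iij]
    have hA := derProj_mul_of_brk h.brk_gen_xw_iij_mem
    have hB := derProj_gen_mul_xw_ij (q := q) i b
    simp only [map_add, map_sub, map_smul, map_mul]
    have hs := h.sum_qii
    have h9 := h.prim.pow_eq_one
    have hqij := h.qij
    simp only [qf_add_left, qf_add_right, qf_δ, h.qii, h.qjj] at hA hB ⊢
    generalize derProj q (gen θ i) = X at *
    generalize derProj q (xw q [i, i, b]) = A at *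
    generalize derProj q (xw q [i, b]) = B at *
    have hXXB : X * X * B = (z ^ 12 * q i b + z ^ 6 * q i b) • (A * X) +
        (z ^ 6 * q i b) ^ 2 • (B * (X * X)) := by
      rw [mul_assoc, hB, mul_add, mul_smul_comm, hA, ← mul_assoc X B X, hB, add_mul,
        smul_mul_assoc, mul_assoc B X X]
      module
    simp only [mul_smul_comm, smul_mul_assoc, hXXB, hA]
    generalize (q i b : ℂ) = a at *
    generalize (q b i : ℂ) = a' at *
    match_scalars
    · grind
    · grind
  · rw [skewDer_brk b (xw_three_mem i i j) (xw_two_mem i j), skewDer_xw_iij_of_ne hb,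
      skewDer_xw_ij_of_ne hb]
    simp

theorem brk_xw_iij_xw_iijk_mem_homogD (i j k : Fin θ) :
    brk q (δ θ i + δ θ i + δ θ j) (δ θ i + δ θ i + δ θ j + δ θ k)
        (xw q [i, i, j]) (xw q [i, i, j, k]) ∈
      homogD θ (δ θ i + δ θ i + δ θ j + (δ θ i + δ θ i + δ θ j + δ θ k)) :=
  brk_mem_homogD q (xw_three_mem i i j) (xw_four_mem i i j k) _ _

theorem derProj_skewDer_brk_xw_iij_xw_iijk (h : IsDiagram q i j k z) {b : Fin θ} (hb : b ≠ k) :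
    derProj q (skewDer q b (brk q (δ θ i + δ θ i + δ θ j) (δ θ i + δ θ i + δ θ j + δ θ k)
      (xw q [i, i, j]) (xw q [i, i, j, k]))) = 0 := by
  rw [skewDer_brk b (xw_three_mem i i j) (xw_four_mem i i j k), skewDer_xw_iijk_of_ne hb]
  by_cases hbj : b = j
  · subst hbj
    rw [h.skewDer_xw_iij]
    have hC := derProj_mul_of_brk h.brk_gen_xw_iijk_mem
    simp only [map_sub, map_smul, map_mul, mul_zero, zero_mul, smul_zero, add_zero, zero_add,
      smul_mul_assoc, mul_smul_comm]
    rw [mul_assoc, hC, mul_smul_comm, ← mul_assoc (derProj q (gen θ i)), hC, smul_mul_assoc,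
      mul_assoc]
    simp only [qf_add_left]
    module
  · rw [skewDer_xw_iij_of_ne hbj]
    simp

theorem skewDer_brk_xw_iij_xw_iijk (h : IsDiagram q i j k z) :
    ∃ c : ℂ, skewDer q k (brk q (δ θ i + δ θ i + δ θ j) (δ θ i + δ θ i + δ θ j + δ θ k)
      (xw q [i, i, j]) (xw q [i, i, j, k])) = c • (xw q [i, i, j] * xw q [i, i, j]) := by
  refine ⟨(1 - z ^ 8) * (1 - qf q (δ θ i + δ θ i + δ θ j) (δ θ i + δ θ i + δ θ j + δ θ k) *
    qf q (δ θ k) (δ θ i + δ θ i + δ θ j)), ?_⟩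
  rw [skewDer_brk k (xw_three_mem i i j) (xw_four_mem i i j k), h.skewDer_xw_iijk,
    skewDer_xw_iij_of_ne h.jk.symm]
  simp only [mul_smul_comm, smul_mul_assoc, zero_mul, mul_zero]
  module

theorem relation_mem_derKer (h : IsDiagram q i j k z) :
    brk q (δ θ i + δ θ i + δ θ j + (δ θ i + δ θ i + δ θ j + δ θ k)) (δ θ i + δ θ j)
      (brk q (δ θ i + δ θ i + δ θ j) (δ θ i + δ θ i + δ θ j + δ θ k)
        (xw q [i, i, j]) (xw q [i, i, j, k]))
      (xw q [i, j]) ∈ derKer q := by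
  have hDmem := brk_xw_iij_xw_iijk_mem_homogD (q := q) i j k
  have hD := fun b => h.derProj_skewDer_brk_xw_iij_xw_iijk (b := b)
  obtain ⟨c, hc⟩ := h.skewDer_brk_xw_iij_xw_iijk
  have hA := derProj_mul_of_brk h.brk_gen_xw_iij_mem
  have hC := derProj_mul_of_brk h.brk_gen_xw_iijk_mem
  have hAB := derProj_mul_of_brk h.brk_xw_iij_xw_ij_mem
  have hXD : derProj q (gen θ i) * derProj q (brk q (δ θ i + δ θ i + δ θ j)
      (δ θ i + δ θ i + δ θ j + δ θ k) (xw q [i, i, j]) (xw q [i, i, j, k])) =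
      qf q (δ θ i) (δ θ i + δ θ i + δ θ j + (δ θ i + δ θ i + δ θ j + δ θ k)) •
        (derProj q (brk q (δ θ i + δ θ i + δ θ j)
      (δ θ i + δ θ i + δ θ j + δ θ k) (xw q [i, i, j]) (xw q [i, i, j, k])) *
        derProj q (gen θ i)) := by
    rw [brk, map_sub, map_smul, map_mul, map_mul, qf_add_right q (δ θ i)]
    generalize derProj q (gen θ i) = X at *
    generalize derProj q (xw q [i, i, j]) = A at *
    generalize derProj q (xw q [i, i, j, k]) = C at *
    have hXAC : X * (A * C) = (qf q (δ θ i) (δ θ i + δ θ i + δ θ j) *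
        qf q (δ θ i) (δ θ i + δ θ i + δ θ j + δ θ k)) • (A * C * X) := by
      rw [← mul_assoc, hA, smul_mul_assoc, mul_assoc, hC, mul_smul_comm, mul_smul, mul_assoc]
    have hXCA : X * (C * A) = (qf q (δ θ i) (δ θ i + δ θ i + δ θ j) *
        qf q (δ θ i) (δ θ i + δ θ i + δ θ j + δ θ k)) • (C * A * X) := by
      rw [← mul_assoc, hC, smul_mul_assoc, mul_assoc, hA, mul_smul_comm, mul_comm, mul_smul,
        mul_assoc]
    rw [mul_sub, mul_smul_comm, hXAC, hXCA, sub_mul, smul_mul_assoc]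
    module
  generalize brk q (δ θ i + δ θ i + δ θ j) (δ θ i + δ θ i + δ θ j + δ θ k)
    (xw q [i, i, j]) (xw q [i, i, j, k]) = D at *
  refine mem_derKer_of_derProj (fun h0 => ?_)
    (brk_mem_homogD q hDmem (xw_two_mem i j) _ _) fun b => ?_
  · simpa [δ] using congrFun h0 i
  rw [skewDer_brk b hDmem (xw_two_mem i j)]
  by_cases hbk : b = k
  · subst hbk
    rw [hc, skewDer_xw_ij_of_ne h.jk.symm]
    simp only [map_sub, map_smul, map_mul, mul_zero, zero_mul, smul_zero, add_zero, zero_add,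
      smul_mul_assoc, mul_smul_comm]
    rw [mul_assoc, hAB, mul_smul_comm, ← mul_assoc (derProj q (xw q [i, i, j])), hAB,
      smul_mul_assoc, mul_assoc]
    simp only [qf_add_left]
    module
  have hDb := hD b hbk
  by_cases hbj : b = j
  · subst hbj
    rw [h.skewDer_xw_ij]
    simp only [map_add, map_sub, map_smul, map_mul, hDb, mul_zero, zero_mul, smul_zero, add_zero,
      zero_add, smul_mul_assoc, mul_smul_comm, hXD]
    have hone : qf q (δ θ i + δ θ i + δ θ b + (δ θ i + δ θ i + δ θ b + δ θ k)) (δ θ i + δ θ b) *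
        qf q (δ θ b) (δ θ i + δ θ i + δ θ b + (δ θ i + δ θ i + δ θ b + δ θ k)) *
        qf q (δ θ i) (δ θ i + δ θ i + δ θ b + (δ θ i + δ θ i + δ θ b + δ θ k)) = 1 := by
      simp only [qf_add_left, qf_add_right, qf_δ]
      calc _ = (q i i : ℂ) ^ 8 * (q b b : ℂ) ^ 4 * ((q i b : ℂ) * q b i) ^ 6 *
            ((q i k : ℂ) * q k i) * ((q b k : ℂ) * q k b) := by ring
        _ = (z ^ 9) ^ 12 := by
          rw [h.qii, h.qjj, h.qij, h.qik, h.qjk]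
          ring
        _ = 1 := by rw [h.prim.pow_eq_one, one_pow]
    rw [smul_smul, smul_smul, smul_smul, sub_eq_zero]
    congr 1
    linear_combination -(1 - z ^ 8) * hone
  · rw [skewDer_xw_ij_of_ne hbj]
    simp only [map_add, map_sub, map_smul, map_mul, hDb, mul_zero, zero_mul, smul_zero, add_zero,
      sub_zero, map_zero]

end IsDiagram

end Relation

end PreNicholsPaper

namespace PreNicholsPaper

/-- Lemma 3.3: if `q_{kk} = q_{jj} = q̃_{ij}⁻¹ = q̃_{jk}⁻¹ ∈ G₉'`,
`q̃_{ik} = 1` and `q_{ii} = q_{kk}⁶`, then `[[x_{iij}, x_{iijk}]_c, x_{ij}]_c = 0`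
in every finite-GKdim pre-Nichols algebra of `q`. -/
theorem statement_7 (θ : ℕ) (q : Fin θ → Fin θ → ℂˣ) (S : BraidedStr θ q)
    (hconn : (dynkin q).Connected)
    (hfd : FiniteDimensional ℂ (TV θ ⧸ Jq S))
    (hAAH : AAH)
    (I : Submodule ℂ (TV θ)) (hI : IsPreNicholsIdeal S I) (hGK : FinGK I)
    (i j k : Fin θ) (hij : i ≠ j) (hik : i ≠ k) (hjk : j ≠ k)
    (h1 : IsPrimitiveRoot (q k k : ℂ) 9)
    (h2 : (q j j : ℂ) = (q k k : ℂ))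
    (h3 : (qtil q i j)⁻¹ = (q k k : ℂ))
    (h4 : (qtil q j k)⁻¹ = (q k k : ℂ))
    (h5 : qtil q i k = 1)
    (h6 : (q i i : ℂ) = (q k k : ℂ) ^ 6) :
    brk q (δ θ i + δ θ i + δ θ j + (δ θ i + δ θ i + δ θ j + δ θ k)) (δ θ i + δ θ j)
      (brk q (δ θ i + δ θ i + δ θ j) (δ θ i + δ θ i + δ θ j + δ θ k)
        (xw q [i, i, j]) (xw q [i, i, j, k]))
      (xw q [i, j]) ∈ I := by
  have hinv : ∀ t : ℂ, t⁻¹ = q k k → t = (q k k : ℂ) ^ 8 := fun t ht => by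
    rw [← inv_inv t, ht, inv_eq_of_mul_eq_one_left]
    rw [← pow_succ, h1.pow_eq_one]
  have h : IsDiagram q i j k (q k k) :=
    ⟨hij, hik, hjk, h1, h6, h2, rfl, hinv _ h3, hinv _ h4, h5⟩
  refine derKer_inf_homogD_le h hAAH hI hGK _ (le_of_eq ?_) ⟨h.relation_mem_derKer,
    brk_mem_homogD q (IsDiagram.brk_xw_iij_xw_iijk_mem_homogD i j k) (xw_two_mem i j) _ _⟩
  module

end PreNicholsPaper
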